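/- arXiv:1606.07877 — 2 statements merged into one kernel-verified Lean document; each statement's English description precedes it below -/
import Mathlib

section
/- Let 0 < t0 < 1/2 and C2 > 0. Let v be a smooth real-valued function on (closed disc of radius 1/2) × [0,t0] solving ∂_t v = e^{-2v} Δv (the logarithmic fast diffusion / conformal Ricci flow equation for v = (1/2) log u). Assume that v ≥ 1 and e^{-2v}|∇ log v|² ≤ C2 everywhere on B_{1/2} × [0,t0], and that t0 ≤ 1/(8 max_{B_{1/2}×[0,t0]} v). Then there exists a constant C3 > 0 depending only on C2 such that the Gauss curvature K := −e^{-2v} Δv satisfies K(x,t) ≤ C3 · v(x,t)/t for all x ∈ B_{1/4} and all t ∈ (0, t0]. -/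
open Real MeasureTheory Metric Set Filter Topology

/-- The Euclidean Laplacian of a function on `ℝ²`. -/
noncomputable def lap (f : EuclideanSpace ℝ (Fin 2) → ℝ) (x : EuclideanSpace ℝ (Fin 2)) : ℝ :=
  iteratedFDeriv ℝ 2 f x ![EuclideanSpace.single 0 1, EuclideanSpace.single 0 1] +
  iteratedFDeriv ℝ 2 f x ![EuclideanSpace.single 1 1, EuclideanSpace.single 1 1]

/-!
Write `L = ∂ₜ - e^{-2u} Δ`, so that the flow is `L u = 0` and the curvature is `K = -∂ₜu`. In
dimension two a sum of squares gives `L G ≤ -K²` for `G = K + 3 e^{-2u}|∇u|²`. Let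
`φ = (t - ε) (r² - |x|²)²` with `r = 3/8`. At a positive maximum of `φ G / u`, with value `M`, the
maximum principle applied to `φ G - M u` yields `(φ K)² ≤ (2 + C) M u`: the cutoff errors are
controlled by the bound `C` on `e^{-2u}|∇ log u|²`. As `t u ≤ 1/8`, that bound also gives
`M u = φ G ≤ φ K + C u`. Hence `φ K ≥ M u / 2` if `M > 4 (2 + C)`, and the quadratic estimate then
forces `M ≤ 4 (2 + C)`, since `u ≥ 1`. Finally let `ε → 0`.
-/

namespace LiYau

/-- The directional derivative of `f` along the constant vector field `e`, as a function of the base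
point, so that it can be iterated. -/
noncomputable def dirDeriv {V : Type*} [NormedAddCommGroup V] [NormedSpace ℝ V]
    (e : V) (f : V → ℝ) : V → ℝ := fun p => fderiv ℝ f p e

local notation "∂[" e "]" => dirDeriv e

section DirectionalDerivative

variable {V : Type*} [NormedAddCommGroup V] [NormedSpace ℝ V] {f g : V → ℝ} {p e : V}

theorem contDiffAt_dirDeriv {m n : WithTop ℕ∞} (hf : ContDiffAt ℝ n f p) (hmn : m + 1 ≤ n) :
    ContDiffAt ℝ m (∂[e] f) p :=
  (hf.fderiv_right hmn).clm_apply contDiffAt_const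

theorem dirDeriv_eventuallyEq (h : f =ᶠ[𝓝 p] g) : ∂[e] f =ᶠ[𝓝 p] ∂[e] g :=
  h.fderiv.fun_comp fun L => L e

theorem dirDeriv_const (c : ℝ) : ∂[e] (fun _ => c) p = 0 := by
  simp [dirDeriv]

theorem dirDeriv_add (hf : DifferentiableAt ℝ f p) (hg : DifferentiableAt ℝ g p) :
    ∂[e] (f + g) p = ∂[e] f p + ∂[e] g p := by
  simp [dirDeriv, fderiv_add hf hg]

theorem dirDeriv_sub (hf : DifferentiableAt ℝ f p) (hg : DifferentiableAt ℝ g p) :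
    ∂[e] (f - g) p = ∂[e] f p - ∂[e] g p := by
  simp [dirDeriv, fderiv_sub hf hg]

theorem dirDeriv_const_smul (hf : DifferentiableAt ℝ f p) (c : ℝ) :
    ∂[e] (c • f) p = c * ∂[e] f p := by
  simp [dirDeriv, fderiv_const_smul hf]

theorem dirDeriv_mul (hf : DifferentiableAt ℝ f p) (hg : DifferentiableAt ℝ g p) :
    ∂[e] (f * g) p = f p * ∂[e] g p + g p * ∂[e] f p := by
  simp [dirDeriv, fderiv_mul hf hg]

theorem dirDeriv_sum {ι : Type*} {s : Finset ι} {F : ι → V → ℝ}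
    (hF : ∀ i ∈ s, DifferentiableAt ℝ (F i) p) :
    ∂[e] (∑ i ∈ s, F i) p = ∑ i ∈ s, ∂[e] (F i) p := by
  simp [dirDeriv, fderiv_sum hF]

theorem dirDeriv_exp (hf : DifferentiableAt ℝ f p) :
    ∂[e] (fun q => exp (f q)) p = exp (f p) * ∂[e] f p := by
  simp [dirDeriv, fderiv_exp hf]

theorem dirDeriv_log (hf : DifferentiableAt ℝ f p) (hp : f p ≠ 0) :
    ∂[e] (fun q => log (f q)) p = ∂[e] f p / f p := by
  simp [dirDeriv, fderiv.log hf hp, div_eq_inv_mul]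

theorem eventually_differentiableAt {n : WithTop ℕ∞} (hf : ContDiffAt ℝ n f p) (hn : 1 ≤ n) :
    ∀ᶠ q in 𝓝 p, DifferentiableAt ℝ f q :=
  ((hf.of_le hn).eventually (by simp)).mono fun _ hq => hq.differentiableAt one_ne_zero

theorem differentiableAt_dirDeriv (hf : ContDiffAt ℝ 2 f p) : DifferentiableAt ℝ (∂[e] f) p :=
  (contDiffAt_dirDeriv hf one_add_one_eq_two.le).differentiableAt one_ne_zero

theorem dirDeriv_dirDeriv_sub (hf : ContDiffAt ℝ 2 f p) (hg : ContDiffAt ℝ 2 g p) :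
    ∂[e] (∂[e] (f - g)) p = ∂[e] (∂[e] f) p - ∂[e] (∂[e] g) p := by
  have first : ∂[e] (f - g) =ᶠ[𝓝 p] ∂[e] f - ∂[e] g := by
    filter_upwards [eventually_differentiableAt hf one_le_two,
      eventually_differentiableAt hg one_le_two] with q hfq hgq using dirDeriv_sub hfq hgq
  rw [(dirDeriv_eventuallyEq first).eq_of_nhds,
    dirDeriv_sub (differentiableAt_dirDeriv hf) (differentiableAt_dirDeriv hg)]

theorem dirDeriv_dirDeriv_const_smul (hf : ContDiffAt ℝ 2 f p) (c : ℝ) :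
    ∂[e] (∂[e] (c • f)) p = c * ∂[e] (∂[e] f) p := by
  have first : ∂[e] (c • f) =ᶠ[𝓝 p] c • ∂[e] f := by
    filter_upwards [eventually_differentiableAt hf one_le_two] with q hfq
      using dirDeriv_const_smul hfq c
  rw [(dirDeriv_eventuallyEq first).eq_of_nhds,
    dirDeriv_const_smul (differentiableAt_dirDeriv hf)]

theorem dirDeriv_dirDeriv_sum {ι : Type*} {s : Finset ι} {F : ι → V → ℝ}
    (hF : ∀ i ∈ s, ContDiffAt ℝ 2 (F i) p) :
    ∂[e] (∂[e] (∑ i ∈ s, F i)) p = ∑ i ∈ s, ∂[e] (∂[e] (F i)) p := by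
  have first : ∂[e] (∑ i ∈ s, F i) =ᶠ[𝓝 p] ∑ i ∈ s, ∂[e] (F i) := by
    filter_upwards [(eventually_all_finset s).2 fun i hi =>
      eventually_differentiableAt (hF i hi) one_le_two] with q hq
    rw [dirDeriv_sum hq, Finset.sum_apply]
  rw [(dirDeriv_eventuallyEq first).eq_of_nhds,
    dirDeriv_sum fun i hi => differentiableAt_dirDeriv (hF i hi)]

theorem dirDeriv_dirDeriv_mul (hf : ContDiffAt ℝ 2 f p) (hg : ContDiffAt ℝ 2 g p) :
    ∂[e] (∂[e] (f * g)) p =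
      f p * ∂[e] (∂[e] g) p + g p * ∂[e] (∂[e] f) p + 2 * (∂[e] f p * ∂[e] g p) := by
  have first : ∂[e] (f * g) =ᶠ[𝓝 p] f * ∂[e] g + g * ∂[e] f := by
    filter_upwards [eventually_differentiableAt hf one_le_two,
      eventually_differentiableAt hg one_le_two] with q hfq hgq using dirDeriv_mul hfq hgq
  have hf1 := hf.differentiableAt two_ne_zero
  have hg1 := hg.differentiableAt two_ne_zero
  have hf2 := differentiableAt_dirDeriv (e := e) hf
  have hg2 := differentiableAt_dirDeriv (e := e) hg
  rw [(dirDeriv_eventuallyEq first).eq_of_nhds, dirDeriv_add (hf1.mul hg2) (hg1.mul hf2),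
    dirDeriv_mul hf1 hg2, dirDeriv_mul hg1 hf2]
  ring

theorem dirDeriv_dirDeriv_eq_fderiv_fderiv (hf : ContDiffAt ℝ 2 f p) (a b : V) :
    ∂[a] (∂[b] f) p = fderiv ℝ (fderiv ℝ f) p a b := by
  have h := (hf.fderiv_right one_add_one_eq_two.le).differentiableAt one_ne_zero
  change fderiv ℝ (fun q => fderiv ℝ f q b) p a = _
  simp [fderiv_clm_apply h (differentiableAt_const b)]

theorem dirDeriv_comm (hf : ContDiffAt ℝ 2 f p) (a b : V) :
    ∂[a] (∂[b] f) p = ∂[b] (∂[a] f) p := by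
  rw [dirDeriv_dirDeriv_eq_fderiv_fderiv hf, dirDeriv_dirDeriv_eq_fderiv_fderiv hf]
  exact hf.isSymmSndFDerivAt (by simp) a b

theorem dirDeriv_dirDeriv_dirDeriv_comm (hf : ContDiffAt ℝ 3 f p) (a b : V) :
    ∂[a] (∂[b] (∂[b] f)) p = ∂[b] (∂[b] (∂[a] f)) p := by
  have hf2 : ∀ᶠ q in 𝓝 p, ContDiffAt ℝ 2 f q := (hf.of_le (by norm_num)).eventually (by simp)
  have swap : ∂[b] (∂[a] f) =ᶠ[𝓝 p] ∂[a] (∂[b] f) :=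
    hf2.mono fun q hq => dirDeriv_comm hq b a
  rw [(dirDeriv_eventuallyEq swap).eq_of_nhds,
    dirDeriv_comm (contDiffAt_dirDeriv hf two_add_one_eq_three.le)]

end DirectionalDerivative

/-- Space-time `ℝ^ι × ℝ`; the last component of a point is the time. -/
abbrev Spacetime (ι : Type*) := EuclideanSpace ℝ ι × ℝ

section HeatOperator

variable {ι : Type*}

/-- The factor `e^{-2u}` by which the inverse metric of `e^{2u}|dx|²` differs from the flat one. -/
noncomputable def invMetric (u : Spacetime ι → ℝ) : Spacetime ι → ℝ := fun p => exp (-2 * u p)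

theorem invMetric_pos (u : Spacetime ι → ℝ) (p : Spacetime ι) : 0 < invMetric u p := exp_pos _

variable [Fintype ι]

/-- The unit time direction. -/
def dt : Spacetime ι := (0, 1)

variable [DecidableEq ι]

/-- The `i`-th spatial coordinate direction. -/
noncomputable def dx (i : ι) : Spacetime ι := (EuclideanSpace.single i 1, 0)

/-- The pairing `∇f · ∇g` of the Euclidean spatial gradients. -/
noncomputable def gradInner (f g : Spacetime ι → ℝ) : Spacetime ι → ℝ :=
  ∑ i, ∂[dx i] f * ∂[dx i] g

/-- The squared length `|∇f|²` of the Euclidean spatial gradient. -/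
noncomputable def gradSq (f : Spacetime ι → ℝ) : Spacetime ι → ℝ := gradInner f f

/-- The Euclidean Laplacian `Δ` in the spatial variables. -/
noncomputable def flatLaplacian (f : Spacetime ι → ℝ) : Spacetime ι → ℝ :=
  ∑ i, ∂[dx i] (∂[dx i] f)

/-- The heat operator `∂ₜ - e^{-2u} Δ`. In dimension two this is the heat operator of the metric
`e^{2u}|dx|²`, and the logarithmic fast diffusion equation reads `heatOp u u = 0`. -/
noncomputable def heatOp (u f : Spacetime ι → ℝ) : Spacetime ι → ℝ :=
  ∂[dt] f - invMetric u * flatLaplacian f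

variable {u f g h : Spacetime ι → ℝ} {p : Spacetime ι}

theorem gradInner_apply : gradInner f g p = ∑ i, ∂[dx i] f p * ∂[dx i] g p := by
  simp [gradInner]

theorem gradSq_apply : gradSq f p = ∑ i, ∂[dx i] f p ^ 2 := by
  simp [gradSq, gradInner, sq]

theorem flatLaplacian_apply : flatLaplacian f p = ∑ i, ∂[dx i] (∂[dx i] f) p := by
  simp [flatLaplacian]

theorem heatOp_apply : heatOp u f p = ∂[dt] f p - invMetric u p * flatLaplacian f p := rfl

theorem gradSq_nonneg (f : Spacetime ι → ℝ) (p : Spacetime ι) : 0 ≤ gradSq f p := by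
  rw [gradSq_apply]; positivity

theorem contDiffAt_gradSq {m n : WithTop ℕ∞} (hf : ContDiffAt ℝ n f p) (hmn : m + 1 ≤ n) :
    ContDiffAt ℝ m (gradSq f) p := by
  rw [show gradSq f = fun q => ∑ i, ∂[dx i] f q ^ 2 from funext fun _ => gradSq_apply]
  exact .sum fun i _ => (contDiffAt_dirDeriv hf hmn).pow 2

theorem gradInner_mul_left (hf : DifferentiableAt ℝ f p) (hg : DifferentiableAt ℝ g p) :
    gradInner (f * g) h p = f p * gradInner g h p + g p * gradInner f h p := by
  simp only [gradInner_apply, dirDeriv_mul hf hg, Finset.mul_sum, ← Finset.sum_add_distrib]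
  exact Finset.sum_congr rfl fun i _ => by ring

theorem neg_two_mul_gradInner_le (c : ℝ) (f g : Spacetime ι → ℝ) (p : Spacetime ι) :
    -2 * c * gradInner f g p ≤ c ^ 2 * gradSq f p + gradSq g p := by
  simp only [gradInner_apply, gradSq_apply, Finset.mul_sum, ← Finset.sum_add_distrib]
  exact Finset.sum_le_sum fun i _ => by linarith [sq_nonneg (c * ∂[dx i] f p + ∂[dx i] g p)]

theorem flatLaplacian_mul (hf : ContDiffAt ℝ 2 f p) (hg : ContDiffAt ℝ 2 g p) :
    flatLaplacian (f * g) p =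
      f p * flatLaplacian g p + g p * flatLaplacian f p + 2 * gradInner f g p := by
  simp only [flatLaplacian_apply, gradInner_apply, dirDeriv_dirDeriv_mul hf hg,
    Finset.sum_add_distrib, Finset.mul_sum]

theorem heatOp_sub (hf : ContDiffAt ℝ 2 f p) (hg : ContDiffAt ℝ 2 g p) :
    heatOp u (f - g) p = heatOp u f p - heatOp u g p := by
  simp only [heatOp_apply, flatLaplacian_apply, dirDeriv_dirDeriv_sub hf hg,
    dirDeriv_sub (hf.differentiableAt two_ne_zero) (hg.differentiableAt two_ne_zero),
    Finset.sum_sub_distrib]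
  ring

theorem heatOp_const_smul (hf : ContDiffAt ℝ 2 f p) (c : ℝ) :
    heatOp u (c • f) p = c * heatOp u f p := by
  simp only [heatOp_apply, flatLaplacian_apply, dirDeriv_dirDeriv_const_smul hf,
    dirDeriv_const_smul (hf.differentiableAt two_ne_zero), ← Finset.mul_sum]
  ring

theorem heatOp_sum {κ : Type*} {s : Finset κ} {F : κ → Spacetime ι → ℝ}
    (hF : ∀ k ∈ s, ContDiffAt ℝ 2 (F k) p) :
    heatOp u (∑ k ∈ s, F k) p = ∑ k ∈ s, heatOp u (F k) p := by
  simp only [heatOp_apply, flatLaplacian_apply, dirDeriv_dirDeriv_sum hF,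
    dirDeriv_sum fun k hk => (hF k hk).differentiableAt two_ne_zero, Finset.sum_sub_distrib,
    ← Finset.mul_sum]
  rw [Finset.sum_comm]

theorem heatOp_mul (hf : ContDiffAt ℝ 2 f p) (hg : ContDiffAt ℝ 2 g p) :
    heatOp u (f * g) p =
      f p * heatOp u g p + g p * heatOp u f p - 2 * invMetric u p * gradInner f g p := by
  simp only [heatOp_apply, flatLaplacian_mul hf hg,
    dirDeriv_mul (hf.differentiableAt two_ne_zero) (hg.differentiableAt two_ne_zero)]
  ring

end HeatOperator

section HarnackQuantity

variable {ι : Type*} [Fintype ι]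

theorem contDiffAt_invMetric {n : WithTop ℕ∞} {u : Spacetime ι → ℝ} {p : Spacetime ι}
    (hu : ContDiffAt ℝ n u p) : ContDiffAt ℝ n (invMetric u) p :=
  (contDiffAt_const.mul hu).exp

theorem dirDeriv_invMetric {u : Spacetime ι → ℝ} {p : Spacetime ι} (hu : DifferentiableAt ℝ u p)
    (e : Spacetime ι) : ∂[e] (invMetric u) p = -2 * (invMetric u p * ∂[e] u p) := by
  have h := dirDeriv_exp (e := e) (hu.const_smul (-2 : ℝ))
  rw [dirDeriv_const_smul hu] at h
  change ∂[e] (invMetric u) p = invMetric u p * _ at h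
  rw [h]; ring

variable [DecidableEq ι] {u f : Spacetime ι → ℝ} {p : Spacetime ι}

theorem gradInner_invMetric (hu : DifferentiableAt ℝ u p) :
    gradInner (invMetric u) f p = -2 * (invMetric u p * gradInner u f p) := by
  simp only [gradInner_apply, dirDeriv_invMetric hu, Finset.mul_sum]
  exact Finset.sum_congr rfl fun i _ => by ring

theorem flatLaplacian_invMetric (hu : ContDiffAt ℝ 2 u p) :
    flatLaplacian (invMetric u) p =
      invMetric u p * (4 * gradSq u p - 2 * flatLaplacian u p) := by
  have second (i : ι) : ∂[dx i] (∂[dx i] (invMetric u)) p =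
      invMetric u p * (4 * ∂[dx i] u p ^ 2 - 2 * ∂[dx i] (∂[dx i] u) p) := by
    have first : ∂[dx i] (invMetric u) =ᶠ[𝓝 p] (-2 : ℝ) • (invMetric u * ∂[dx i] u) :=
      (eventually_differentiableAt hu one_le_two).mono fun q hq => dirDeriv_invMetric hq _
    have hE := (contDiffAt_invMetric hu).differentiableAt two_ne_zero
    have hui := differentiableAt_dirDeriv (e := dx i) hu
    rw [(dirDeriv_eventuallyEq first).eq_of_nhds, dirDeriv_const_smul (hE.mul hui),
      dirDeriv_mul hE hui, dirDeriv_invMetric (hu.differentiableAt two_ne_zero)]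
    ring
  simp only [flatLaplacian_apply, second, gradSq_apply, ← Finset.mul_sum, Finset.sum_sub_distrib]

theorem heatOp_invMetric (hu : ContDiffAt ℝ 2 u p) :
    heatOp u (invMetric u) p =
      -2 * invMetric u p * heatOp u u p - 4 * invMetric u p ^ 2 * gradSq u p := by
  rw [heatOp_apply, dirDeriv_invMetric (hu.differentiableAt two_ne_zero),
    flatLaplacian_invMetric hu, heatOp_apply]
  ring

theorem dirDeriv_flatLaplacian (hu : ContDiffAt ℝ 3 u p) (e : Spacetime ι) :
    ∂[e] (flatLaplacian u) p = flatLaplacian (∂[e] u) p := by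
  have hu' (i : ι) : DifferentiableAt ℝ (∂[dx i] (∂[dx i] u)) p :=
    differentiableAt_dirDeriv (contDiffAt_dirDeriv hu two_add_one_eq_three.le)
  rw [flatLaplacian, dirDeriv_sum fun i _ => hu' i, flatLaplacian_apply]
  exact Finset.sum_congr rfl fun i _ => dirDeriv_dirDeriv_dirDeriv_comm hu e (dx i)

/-- Obtained by differentiating `∂ₜu = e^{-2u} Δu` in the direction `e`. -/
theorem heatOp_dirDeriv (hu : ContDiffAt ℝ 3 u p) (pde : heatOp u u =ᶠ[𝓝 p] 0)
    (e : Spacetime ι) : heatOp u (∂[e] u) p = -2 * (∂[e] u p * ∂[dt] u p) := by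
  have hu2 : ContDiffAt ℝ 2 u p := hu.of_le (by norm_num)
  have hu1 := hu2.differentiableAt two_ne_zero
  have hE := (contDiffAt_invMetric hu2).differentiableAt two_ne_zero
  have hlap : DifferentiableAt ℝ (flatLaplacian u) p := .sum fun i _ =>
    differentiableAt_dirDeriv (contDiffAt_dirDeriv hu two_add_one_eq_three.le)
  have evolution : ∂[dt] u p = invMetric u p * flatLaplacian u p :=
    sub_eq_zero.1 pde.eq_of_nhds
  have derivative : ∂[e] (heatOp u u) p = 0 := by
    rw [(dirDeriv_eventuallyEq pde).eq_of_nhds]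
    exact dirDeriv_const 0
  rw [heatOp, dirDeriv_sub (differentiableAt_dirDeriv hu2) (hE.mul hlap), dirDeriv_mul hE hlap,
    dirDeriv_invMetric hu1, dirDeriv_flatLaplacian hu, dirDeriv_comm hu2] at derivative
  rw [heatOp_apply, evolution]
  linear_combination derivative

theorem heatOp_gradSq (hu : ContDiffAt ℝ 3 u p) (pde : heatOp u u =ᶠ[𝓝 p] 0) :
    heatOp u (gradSq u) p =
      -4 * (gradSq u p * ∂[dt] u p) - 2 * invMetric u p * ∑ i, gradSq (∂[dx i] u) p := by
  have hui (i : ι) : ContDiffAt ℝ 2 (∂[dx i] u) p :=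
    contDiffAt_dirDeriv hu two_add_one_eq_three.le
  have hsq (i : ι) : heatOp u (∂[dx i] u * ∂[dx i] u) p =
      -4 * (∂[dx i] u p ^ 2 * ∂[dt] u p) - 2 * invMetric u p * gradSq (∂[dx i] u) p := by
    rw [heatOp_mul (hui i) (hui i), heatOp_dirDeriv hu pde, gradSq]
    ring
  have expand : heatOp u (gradSq u) p = ∑ i, heatOp u (∂[dx i] u * ∂[dx i] u) p :=
    heatOp_sum fun i _ => (hui i).mul (hui i)
  simp only [expand, hsq, gradSq_apply (f := u), Finset.sum_sub_distrib, ← Finset.mul_sum,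
    ← Finset.sum_mul]

theorem gradInner_gradSq (hu : ContDiffAt ℝ 2 u p) :
    gradInner u (gradSq u) p = 2 * ∑ i, ∂[dx i] u p * gradInner u (∂[dx i] u) p := by
  have hui (i : ι) := differentiableAt_dirDeriv (e := dx i) hu
  have hgrad (j : ι) : ∂[dx j] (gradSq u) p = 2 * ∑ i, ∂[dx i] u p * ∂[dx j] (∂[dx i] u) p := by
    rw [gradSq, gradInner, dirDeriv_sum fun i _ => (hui i).mul (hui i), Finset.mul_sum]
    exact Finset.sum_congr rfl fun i _ => by rw [dirDeriv_mul (hui i) (hui i)]; ring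
  simp only [gradInner_apply, hgrad, Finset.mul_sum]
  rw [Finset.sum_comm]
  exact Finset.sum_congr rfl fun i _ => Finset.sum_congr rfl fun j _ => by ring

/-- The squared gradient length `e^{-2u}|∇u|²` of `u` in the metric `e^{2u}|dx|²`. -/
noncomputable def metricGradSq (u : Spacetime ι → ℝ) : Spacetime ι → ℝ :=
  invMetric u * gradSq u

theorem contDiffAt_metricGradSq (hu : ContDiffAt ℝ 3 u p) : ContDiffAt ℝ 2 (metricGradSq u) p :=
  (contDiffAt_invMetric (hu.of_le (by norm_num))).mul
    (contDiffAt_gradSq hu two_add_one_eq_three.le)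

theorem heatOp_metricGradSq (hu : ContDiffAt ℝ 3 u p) (pde : heatOp u u =ᶠ[𝓝 p] 0) :
    heatOp u (metricGradSq u) p = -4 * (metricGradSq u p * ∂[dt] u p) - 4 * metricGradSq u p ^ 2 +
      2 * invMetric u p ^ 2 * (4 * ∑ i, ∂[dx i] u p * gradInner u (∂[dx i] u) p -
        ∑ i, gradSq (∂[dx i] u) p) := by
  have hu2 : ContDiffAt ℝ 2 u p := hu.of_le (by norm_num)
  rw [metricGradSq, heatOp_mul (contDiffAt_invMetric hu2)
      (contDiffAt_gradSq hu two_add_one_eq_three.le), heatOp_gradSq hu pde,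
    heatOp_invMetric hu2, gradInner_invMetric (hu2.differentiableAt two_ne_zero),
    gradInner_gradSq hu2, pde.eq_of_nhds]
  simp only [Pi.mul_apply, Pi.zero_apply]
  ring

/-- The Li–Yau Harnack quantity `-∂ₜu + 3 e^{-2u}|∇u|²`. Along the flow `-∂ₜu` is the Gauss
curvature of the metric `e^{2u}|dx|²`. -/
noncomputable def harnackQuantity (u : Spacetime ι → ℝ) : Spacetime ι → ℝ :=
  (3 : ℝ) • metricGradSq u - ∂[dt] u

theorem harnackQuantity_apply : harnackQuantity u p = 3 * metricGradSq u p - ∂[dt] u p := rfl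

theorem contDiffAt_harnackQuantity (hu : ContDiffAt ℝ 3 u p) :
    ContDiffAt ℝ 2 (harnackQuantity u) p :=
  ((contDiffAt_metricGradSq hu).const_smul (3 : ℝ)).sub
    (contDiffAt_dirDeriv hu two_add_one_eq_three.le)

end HarnackQuantity

/-- The coefficient `3` in the Harnack quantity makes the two sides differ by `6 e^{-4u}` times the
squared norm of the trace-free part of `D²u - 2 ∇u ⊗ ∇u`. -/
theorem heatOp_harnackQuantity_le {u : Spacetime (Fin 2) → ℝ} {p : Spacetime (Fin 2)}
    (hu : ContDiffAt ℝ 3 u p) (pde : heatOp u u =ᶠ[𝓝 p] 0) :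
    heatOp u (harnackQuantity u) p ≤ -(∂[dt] u p) ^ 2 := by
  have evolution : ∂[dt] u p = invMetric u p * flatLaplacian u p :=
    sub_eq_zero.1 pde.eq_of_nhds
  have mixed : ∂[dx 1] (∂[dx 0] u) p = ∂[dx 0] (∂[dx 1] u) p :=
    dirDeriv_comm (hu.of_le (by norm_num)) _ _
  have split : heatOp u (harnackQuantity u) p =
      heatOp u ((3 : ℝ) • metricGradSq u) p - heatOp u (∂[dt] u) p :=
    heatOp_sub ((contDiffAt_metricGradSq hu).const_smul (3 : ℝ))
      (contDiffAt_dirDeriv hu two_add_one_eq_three.le)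
  rw [split, heatOp_const_smul (contDiffAt_metricGradSq hu), heatOp_metricGradSq hu pde,
    heatOp_dirDeriv hu pde, evolution, metricGradSq, Pi.mul_apply]
  simp only [gradInner_apply, gradSq_apply, flatLaplacian_apply, Fin.sum_univ_two, mixed]
  have square : 0 ≤ 3 * invMetric u p ^ 2 *
      (((∂[dx 0] (∂[dx 0] u) p - 2 * ∂[dx 0] u p ^ 2) -
        (∂[dx 1] (∂[dx 1] u) p - 2 * ∂[dx 1] u p ^ 2)) ^ 2 +
      (2 * (∂[dx 0] (∂[dx 1] u) p - 2 * (∂[dx 0] u p * ∂[dx 1] u p))) ^ 2) := by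
    positivity
  linear_combination square

section MaximumPrinciple

theorem deriv_deriv_nonpos_of_isLocalMax {g : ℝ → ℝ} {a : ℝ} (h : IsLocalMax g a)
    (hc : ContinuousAt g a) : deriv (deriv g) a ≤ 0 := by
  by_contra! hpos
  have hmin : IsLocalMin g a := isLocalMin_of_deriv_deriv_pos hpos h.deriv_eq_zero hc
  have hconst : g =ᶠ[𝓝 a] fun _ => g a := by
    filter_upwards [h, hmin] with s hle hge using le_antisymm hle hge
  simp [hconst.deriv.deriv_eq] at hpos

theorem dirDeriv_dirDeriv_nonpos_of_isLocalMax {V : Type*} [NormedAddCommGroup V]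
    [NormedSpace ℝ V] {f : V → ℝ} {p e : V} (hf : ContDiffAt ℝ 2 f p)
    (h : IsLocalMax (fun s : ℝ => f (p + s • e)) 0) : ∂[e] (∂[e] f) p ≤ 0 := by
  have line (s : ℝ) : HasDerivAt (fun s : ℝ => p + s • e) e s := by
    simpa using ((hasDerivAt_id s).smul_const e).const_add p
  have along {g : V → ℝ} {s : ℝ} (hg : DifferentiableAt ℝ g (p + s • e)) :
      HasDerivAt (fun s : ℝ => g (p + s • e)) (∂[e] g (p + s • e)) s :=
    hg.hasFDerivAt.comp_hasDerivAt s (line s)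
  have toP : Tendsto (fun s : ℝ => p + s • e) (𝓝 0) (𝓝 p) := by
    simpa using (line 0).continuousAt.tendsto
  have first : deriv (fun s : ℝ => f (p + s • e)) =ᶠ[𝓝 0] fun s => ∂[e] f (p + s • e) :=
    (toP.eventually (eventually_differentiableAt hf one_le_two)).mono fun s hs => (along hs).deriv
  have hf0 : DifferentiableAt ℝ f (p + (0 : ℝ) • e) := by
    simpa using hf.differentiableAt two_ne_zero
  have hf1 : DifferentiableAt ℝ (∂[e] f) (p + (0 : ℝ) • e) := by
    simpa using differentiableAt_dirDeriv hf
  have second := deriv_deriv_nonpos_of_isLocalMax h (along hf0).continuousAt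
  rw [first.deriv_eq, (along hf1).deriv] at second
  simpa using second

theorem mem_posTangentConeAt_past {V : Type*} [NormedAddCommGroup V] [NormedSpace ℝ V]
    {p e : V × ℝ} (he : e.2 ≤ 0) : e ∈ posTangentConeAt {q : V × ℝ | q.2 ≤ p.2} p := by
  refine mem_posTangentConeAt_of_segment_subset ?_
  exact ((convex_Iic p.2).linear_preimage (LinearMap.snd ℝ _ ℝ)).segment_subset (by simp)
    (by simpa using he)

variable {ι : Type*} [Fintype ι] [DecidableEq ι] {H u : Spacetime ι → ℝ} {p : Spacetime ι}

theorem dirDeriv_dx_eq_zero_of_isLocalMaxOn (hH : DifferentiableAt ℝ H p)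
    (hmax : IsLocalMaxOn H {q | q.2 ≤ p.2} p) (i : ι) : ∂[dx i] H p = 0 :=
  hmax.hasFDerivWithinAt_eq_zero hH.hasFDerivAt.hasFDerivWithinAt
    (mem_posTangentConeAt_past (by simp [dx])) (mem_posTangentConeAt_past (by simp [dx]))

theorem heatOp_nonneg_of_isLocalMaxOn (hH : ContDiffAt ℝ 2 H p)
    (hmax : IsLocalMaxOn H {q | q.2 ≤ p.2} p) : 0 ≤ heatOp u H p := by
  have htime : 0 ≤ ∂[dt] H p := by
    have h := hmax.hasFDerivWithinAt_nonpos
      (hH.differentiableAt two_ne_zero).hasFDerivAt.hasFDerivWithinAt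
      (mem_posTangentConeAt_past (e := -dt) (by simp [dt]))
    simpa [dirDeriv] using h
  have hspace (i : ι) : ∂[dx i] (∂[dx i] H) p ≤ 0 := by
    refine dirDeriv_dirDeriv_nonpos_of_isLocalMax hH ?_
    have toP : Tendsto (fun s : ℝ => p + s • dx i) (𝓝 0) (𝓝[{q | q.2 ≤ p.2}] p) :=
      tendsto_nhdsWithin_iff.2
        ⟨(by fun_prop : Continuous fun s : ℝ => p + s • dx i).tendsto' _ _ (by simp),
          .of_forall fun s => by simp [dx]⟩
    filter_upwards [toP.eventually hmax] with s hs using by simpa using hs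
  have hlap : flatLaplacian H p ≤ 0 := by
    rw [flatLaplacian_apply]
    exact Finset.sum_nonpos fun i _ => hspace i
  rw [heatOp_apply]
  linarith [mul_nonpos_of_nonneg_of_nonpos (invMetric_pos u p).le hlap]

/-- At the touching point `φ ∇g = M ∇u - g ∇φ`, which eliminates `∇g` from the inequality
`0 ≤ φ (∂ₜ - e^{-2u}Δ)(φ g - M u)`. -/
theorem neg_sq_mul_heatOp_le_of_isLocalMaxOn {φ g : Spacetime ι → ℝ} {M : ℝ}
    (hφ : ContDiffAt ℝ 2 φ p) (hg : ContDiffAt ℝ 2 g p) (hu : ContDiffAt ℝ 2 u p)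
    (pde : heatOp u u p = 0) (hφ0 : 0 ≤ φ p)
    (hmax : IsLocalMaxOn (φ * g - M • u) {q | q.2 ≤ p.2} p) :
    -(φ p ^ 2 * heatOp u g p) ≤
      g p * (φ p * heatOp u φ p + 2 * invMetric u p * gradSq φ p) -
        2 * invMetric u p * M * gradInner φ u p := by
  have hφ1 := hφ.differentiableAt two_ne_zero
  have hg1 := hg.differentiableAt two_ne_zero
  have hu1 := hu.differentiableAt two_ne_zero
  have hφg : ContDiffAt ℝ 2 (φ * g) p := hφ.mul hg
  have hMu : ContDiffAt ℝ 2 (M • u) p := hu.const_smul M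
  have gradient_eq (i : ι) : φ p * ∂[dx i] g p = M * ∂[dx i] u p - g p * ∂[dx i] φ p := by
    have h : ∂[dx i] (φ * g - M • u) p = 0 :=
      dirDeriv_dx_eq_zero_of_isLocalMaxOn ((hφg.sub hMu).differentiableAt two_ne_zero) hmax i
    rw [dirDeriv_sub (hφg.differentiableAt two_ne_zero) (hMu.differentiableAt two_ne_zero),
      dirDeriv_mul hφ1 hg1, dirDeriv_const_smul hu1] at h
    linear_combination h
  have eliminate : φ p * gradInner φ g p = M * gradInner φ u p - g p * gradSq φ p := by
    simp only [gradInner_apply, gradSq_apply, Finset.mul_sum, ← Finset.sum_sub_distrib]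
    exact Finset.sum_congr rfl fun i _ => by linear_combination ∂[dx i] φ p * gradient_eq i
  have parabolic : 0 ≤ heatOp u (φ * g - M • u) p :=
    heatOp_nonneg_of_isLocalMaxOn (hφg.sub hMu) hmax
  rw [heatOp_sub hφg hMu, heatOp_const_smul hu, pde, heatOp_mul hφ hg] at parabolic
  linear_combination φ p * parabolic - 2 * invMetric u p * eliminate

end MaximumPrinciple

section Cutoff

variable {ι : Type*} [Fintype ι]

/-- The function `r² - |x|²`, positive exactly on the ball of radius `r`. -/
noncomputable def bump (r : ℝ) : Spacetime ι → ℝ := fun p => r ^ 2 - ‖p.1‖ ^ 2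

/-- The time elapsed since `ε`. -/
def elapsed (ε : ℝ) : Spacetime ι → ℝ := fun p => p.2 - ε

/-- The parabolic cutoff `(t - ε) (r² - |x|²)²`, vanishing at time `ε` and on the sphere of radius
`r`. The square makes `|∇φ|²` proportional to `φ`. -/
noncomputable def cutoff (r ε : ℝ) : Spacetime ι → ℝ := elapsed ε * (bump r * bump r)

variable {r ε : ℝ} {u f : Spacetime ι → ℝ} {p : Spacetime ι}

theorem contDiff_bump {n : WithTop ℕ∞} : ContDiff ℝ n (bump (ι := ι) r) :=
  contDiff_const.sub (contDiff_fst.norm_sq ℝ)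

theorem contDiff_elapsed {n : WithTop ℕ∞} : ContDiff ℝ n (elapsed (ι := ι) ε) :=
  contDiff_snd.sub contDiff_const

theorem contDiff_cutoff {n : WithTop ℕ∞} : ContDiff ℝ n (cutoff (ι := ι) r ε) :=
  contDiff_elapsed.mul (contDiff_bump.mul contDiff_bump)

theorem dirDeriv_elapsed (e : Spacetime ι) : ∂[e] (elapsed ε) = fun _ => e.2 := by
  funext p
  have h : HasFDerivAt (elapsed ε) (ContinuousLinearMap.snd ℝ (EuclideanSpace ℝ ι) ℝ) p :=
    hasFDerivAt_snd.sub_const ε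
  simp [dirDeriv, h.fderiv]

theorem dirDeriv_bump (e : Spacetime ι) : ∂[e] (bump r) = fun p => -2 * inner ℝ p.1 e.1 := by
  funext p
  have h : HasFDerivAt (bump r) _ p := hasFDerivAt_fst.norm_sq.const_sub (r ^ 2)
  simp [dirDeriv, h.fderiv]

variable [DecidableEq ι]

theorem dirDeriv_dx_bump (i : ι) : ∂[dx i] (bump r) = fun p => -2 * p.1 i := by
  simp [dirDeriv_bump, dx, EuclideanSpace.inner_single_right]

theorem gradSq_bump : gradSq (bump r) p = 4 * ‖p.1‖ ^ 2 := by
  simp only [gradSq_apply, dirDeriv_dx_bump, mul_pow, ← Finset.mul_sum,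
    EuclideanSpace.real_norm_sq_eq]
  norm_num

theorem heatOp_bump : heatOp u (bump r) p = 2 * Fintype.card ι * invMetric u p := by
  have second (i : ι) : ∂[dx i] (∂[dx i] (bump r)) p = -2 := by
    have h : HasFDerivAt (fun q : Spacetime ι => -2 * q.1 i) _ p :=
      (EuclideanSpace.proj i ∘L ContinuousLinearMap.fst ℝ _ ℝ).hasFDerivAt.const_mul (-2 : ℝ)
    rw [dirDeriv_dx_bump, dirDeriv, h.fderiv]
    simp [dx]
  simp only [heatOp_apply, flatLaplacian_apply, second]
  simp [dirDeriv_bump, dt]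
  ring

theorem gradInner_elapsed : gradInner (elapsed ε) f p = 0 := by
  simp [gradInner_apply, dirDeriv_elapsed, dx]

theorem heatOp_elapsed : heatOp u (elapsed ε) p = 1 := by
  simp [heatOp_apply, flatLaplacian_apply, dirDeriv_elapsed, dx, dt, dirDeriv_const]

theorem gradInner_cutoff :
    gradInner (cutoff r ε) f p = 2 * (elapsed ε p * bump r p) * gradInner (bump r) f p := by
  have hb : DifferentiableAt ℝ (bump r) p := contDiff_bump.contDiffAt.differentiableAt one_ne_zero
  have he : DifferentiableAt ℝ (elapsed ε) p :=
    contDiff_elapsed.contDiffAt.differentiableAt one_ne_zero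
  rw [cutoff, gradInner_mul_left he (hb.mul hb), gradInner_mul_left hb hb, gradInner_elapsed]
  ring

theorem cutoff_mul_heatOp_add_gradSq :
    cutoff r ε p * heatOp u (cutoff r ε) p + 2 * invMetric u p * gradSq (cutoff r ε) p =
      cutoff r ε p * (bump r p ^ 2 + elapsed ε p * invMetric u p *
        (4 * Fintype.card ι * bump r p + 24 * ‖p.1‖ ^ 2)) := by
  have hb : ContDiffAt ℝ 2 (bump r) p := contDiff_bump.contDiffAt
  have hbb : ContDiffAt ℝ 2 (bump r * bump r) p := hb.mul hb
  have grad : gradSq (cutoff r ε) p = 16 * (elapsed ε p * bump r p) ^ 2 * ‖p.1‖ ^ 2 := by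
    have symm : gradInner (bump r) (cutoff r ε) p = gradInner (cutoff r ε) (bump r) p := by
      simp only [gradInner, mul_comm]
    rw [gradSq, gradInner_cutoff, symm, gradInner_cutoff, ← gradSq, gradSq_bump]
    ring
  have heat : heatOp u (cutoff r ε) p = bump r p ^ 2 + elapsed ε p * invMetric u p *
      (4 * Fintype.card ι * bump r p - 8 * ‖p.1‖ ^ 2) := by
    rw [cutoff, heatOp_mul contDiff_elapsed.contDiffAt hbb, heatOp_mul hb hb, heatOp_bump,
      heatOp_elapsed, gradInner_elapsed, ← gradSq, gradSq_bump, Pi.mul_apply]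
    ring
  rw [grad, heat, show cutoff r ε p = elapsed ε p * (bump r p * bump r p) from rfl]
  ring

end Cutoff

/-- The parabolic cylinder `B_{1/2} × (0, T)`. -/
def cylinder (T : ℝ) : Set (Spacetime (Fin 2)) := ball 0 (1 / 2) ×ˢ Ioo 0 T

/-- `u` solves the logarithmic fast diffusion equation on `B_{1/2} × (0, T)` under the assumptions
of the Harnack estimate there: `u ≥ 1`, `e^{-2u}|∇ log u|² ≤ C` and `T ≤ 1 / (8 u)`. -/
structure IsControlledSolution (C T : ℝ) (u : Spacetime (Fin 2) → ℝ) : Prop where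
  contDiffOn : ContDiffOn ℝ 3 u (cylinder T)
  heatOp_eq_zero : ∀ p ∈ cylinder T, heatOp u u p = 0
  one_le : ∀ p ∈ cylinder T, 1 ≤ u p
  metricGradSq_le : ∀ p ∈ cylinder T, metricGradSq u p ≤ C * u p ^ 2
  mul_le : ∀ p ∈ cylinder T, T * u p ≤ 1 / 8

theorem isOpen_cylinder {T : ℝ} : IsOpen (cylinder T) := isOpen_ball.prod isOpen_Ioo

theorem metricGradSq_nonneg {ι : Type*} [Fintype ι] [DecidableEq ι] (u : Spacetime ι → ℝ)
    (p : Spacetime ι) : 0 ≤ metricGradSq u p :=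
  mul_nonneg (invMetric_pos u p).le (gradSq_nonneg u p)

theorem prod_Icc_mem_nhdsWithin_past {X : Type*} [TopologicalSpace X] {K : Set X} {a b : ℝ}
    {p : X × ℝ} (hK : K ∈ 𝓝 p.1) (ha : a < p.2) (hb : p.2 ≤ b) :
    K ×ˢ Icc a b ∈ 𝓝[{q | q.2 ≤ p.2}] p := by
  filter_upwards [nhdsWithin_le_nhds (prod_mem_nhds hK (Ioi_mem_nhds ha)), self_mem_nhdsWithin]
    with q hq hpast using ⟨hq.1, hq.2.le, hpast.trans hb⟩

namespace IsControlledSolution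

variable {C T ε : ℝ} {u : Spacetime (Fin 2) → ℝ} {p : Spacetime (Fin 2)}

theorem contDiffAt (hu : IsControlledSolution C T u) (hp : p ∈ cylinder T) :
    ContDiffAt ℝ 3 u p :=
  hu.contDiffOn.contDiffAt (isOpen_cylinder.mem_nhds hp)

theorem heatOp_eventuallyEq_zero (hu : IsControlledSolution C T u) (hp : p ∈ cylinder T) :
    heatOp u u =ᶠ[𝓝 p] 0 :=
  eventually_of_mem (isOpen_cylinder.mem_nhds hp) hu.heatOp_eq_zero

theorem invMetric_le_one (hu : IsControlledSolution C T u) (hp : p ∈ cylinder T) :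
    invMetric u p ≤ 1 :=
  exp_le_one_iff.2 (by linarith [hu.one_le p hp])

theorem const_nonneg (hu : IsControlledSolution C T u) (hp : p ∈ cylinder T) : 0 ≤ C := by
  have h := (metricGradSq_nonneg u p).trans (hu.metricGradSq_le p hp)
  exact nonneg_of_mul_nonneg_left h (by have := hu.one_le p hp; positivity)

theorem elapsed_mul_le (hu : IsControlledSolution C T u) (hp : p ∈ cylinder T) (hε : 0 ≤ ε) :
    elapsed ε p * u p ≤ 1 / 8 := by
  have h : elapsed ε p ≤ T := by simp only [elapsed]; linarith [hp.2.2]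
  exact (mul_le_mul_of_nonneg_right h (by linarith [hu.one_le p hp])).trans (hu.mul_le p hp)

theorem elapsed_le (hu : IsControlledSolution C T u) (hp : p ∈ cylinder T) (hε : 0 ≤ ε)
    (helapsed : 0 ≤ elapsed ε p) : elapsed ε p ≤ 1 / 8 :=
  (le_mul_of_one_le_right helapsed (hu.one_le p hp)).trans (hu.elapsed_mul_le hp hε)

theorem neg_two_mul_gradInner_bump_le (hu : IsControlledSolution C T u) (hp : p ∈ cylinder T) :
    -2 * invMetric u p * gradInner (bump (3 / 8)) u p ≤ (1 + C) * u p := by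
  have hu0 : 0 < u p := by linarith [hu.one_le p hp]
  have hx : ‖p.1‖ ^ 2 ≤ 1 / 4 := by
    have := mem_ball_zero_iff.1 hp.1
    nlinarith [norm_nonneg p.1]
  have young := neg_two_mul_gradInner_le (u p) (bump (3 / 8)) u p
  rw [gradSq_bump] at young
  refine le_of_mul_le_mul_right ?_ hu0
  calc -2 * invMetric u p * gradInner (bump (3 / 8)) u p * u p
      = invMetric u p * (-2 * u p * gradInner (bump (3 / 8)) u p) := by ring
    _ ≤ invMetric u p * (u p ^ 2 * (4 * ‖p.1‖ ^ 2) + gradSq u p) := by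
        have := (invMetric_pos u p).le
        gcongr
    _ = invMetric u p * (u p ^ 2 * (4 * ‖p.1‖ ^ 2)) + metricGradSq u p := by
        rw [metricGradSq, Pi.mul_apply]; ring
    _ ≤ 1 * (u p ^ 2 * (4 * (1 / 4))) + C * u p ^ 2 := by
        gcongr
        exacts [hu.invMetric_le_one hp, hu.metricGradSq_le p hp]
    _ = (1 + C) * u p * u p := by ring

theorem neg_two_mul_gradInner_cutoff_le (hu : IsControlledSolution C T u) (hp : p ∈ cylinder T)
    (hε : 0 ≤ ε) (helapsed : 0 ≤ elapsed ε p) (hbump : 0 ≤ bump (3 / 8) p) :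
    -2 * invMetric u p * gradInner (cutoff (3 / 8) ε) u p ≤ (1 + C) * u p := by
  have hrhs : 0 ≤ (1 + C) * u p := by
    have := hu.one_le p hp
    have := hu.const_nonneg hp
    positivity
  have hfactor : 2 * (elapsed ε p * bump (3 / 8) p) ≤ 1 := by
    have hbump_le : bump (3 / 8) p ≤ 1 := by simp only [bump]; linarith [sq_nonneg ‖p.1‖]
    nlinarith [hu.elapsed_le hp hε helapsed]
  calc -2 * invMetric u p * gradInner (cutoff (3 / 8) ε) u p
      = 2 * (elapsed ε p * bump (3 / 8) p) *
          (-2 * invMetric u p * gradInner (bump (3 / 8)) u p) := by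
        rw [gradInner_cutoff]; ring
    _ ≤ 2 * (elapsed ε p * bump (3 / 8) p) * ((1 + C) * u p) :=
        mul_le_mul_of_nonneg_left (hu.neg_two_mul_gradInner_bump_le hp) (by positivity)
    _ ≤ (1 + C) * u p := mul_le_of_le_one_left hrhs hfactor

theorem cutoff_mul_heatOp_add_gradSq_le (hu : IsControlledSolution C T u) (hp : p ∈ cylinder T)
    (hε : 0 ≤ ε) (helapsed : 0 ≤ elapsed ε p) (hbump : 0 ≤ bump (3 / 8) p) :
    cutoff (3 / 8) ε p * heatOp u (cutoff (3 / 8) ε) p +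
      2 * invMetric u p * gradSq (cutoff (3 / 8) ε) p ≤ cutoff (3 / 8) ε p := by
  have hcutoff : 0 ≤ cutoff (3 / 8) ε p := mul_nonneg helapsed (mul_nonneg hbump hbump)
  have hbump_eq : bump (3 / 8) p = 9 / 64 - ‖p.1‖ ^ 2 := by simp only [bump]; norm_num
  have hfactor : elapsed ε p * invMetric u p ≤ 1 / 8 * 1 := by
    gcongr
    exacts [(invMetric_pos u p).le, hu.elapsed_le hp hε helapsed, hu.invMetric_le_one hp]
  rw [cutoff_mul_heatOp_add_gradSq, Fintype.card_fin]
  refine mul_le_of_le_one_right hcutoff ?_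
  calc bump (3 / 8) p ^ 2 + elapsed ε p * invMetric u p *
        (4 * (2 : ℕ) * bump (3 / 8) p + 24 * ‖p.1‖ ^ 2)
      ≤ bump (3 / 8) p ^ 2 + 1 / 8 * 1 * (4 * (2 : ℕ) * bump (3 / 8) p + 24 * ‖p.1‖ ^ 2) := by
        gcongr
    _ ≤ 1 := by
        push_cast
        nlinarith [sq_nonneg ‖p.1‖]

theorem sq_cutoff_mul_dt_le {M : ℝ} (hu : IsControlledSolution C T u) (hp : p ∈ cylinder T)
    (hε : 0 ≤ ε) (helapsed : 0 < elapsed ε p) (hbump : 0 < bump (3 / 8) p) (hM : 0 ≤ M)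
    (htouch : cutoff (3 / 8) ε p * harnackQuantity u p = M * u p)
    (hmax : IsLocalMaxOn (cutoff (3 / 8) ε * harnackQuantity u - M • u) {q | q.2 ≤ p.2} p) :
    (cutoff (3 / 8) ε p * ∂[dt] u p) ^ 2 ≤ (2 + C) * (M * u p) := by
  have hcutoff : 0 < cutoff (3 / 8) ε p := mul_pos helapsed (mul_pos hbump hbump)
  have hharnack : 0 ≤ harnackQuantity u p := by
    refine nonneg_of_mul_nonneg_right ?_ hcutoff
    rw [htouch]
    exact mul_nonneg hM (by linarith [hu.one_le p hp])
  have hu3 := hu.contDiffAt hp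
  have hheat := heatOp_harnackQuantity_le hu3 (hu.heatOp_eventuallyEq_zero hp)
  calc (cutoff (3 / 8) ε p * ∂[dt] u p) ^ 2
      = cutoff (3 / 8) ε p ^ 2 * (∂[dt] u p) ^ 2 := by ring
    _ ≤ cutoff (3 / 8) ε p ^ 2 * -heatOp u (harnackQuantity u) p := by gcongr; linarith
    _ = -(cutoff (3 / 8) ε p ^ 2 * heatOp u (harnackQuantity u) p) := by ring
    _ ≤ harnackQuantity u p * (cutoff (3 / 8) ε p * heatOp u (cutoff (3 / 8) ε) p +
            2 * invMetric u p * gradSq (cutoff (3 / 8) ε) p) -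
          2 * invMetric u p * M * gradInner (cutoff (3 / 8) ε) u p :=
        neg_sq_mul_heatOp_le_of_isLocalMaxOn contDiff_cutoff.contDiffAt
          (contDiffAt_harnackQuantity hu3) (hu3.of_le (by norm_num)) (hu.heatOp_eq_zero p hp)
          hcutoff.le hmax
    _ = harnackQuantity u p * (cutoff (3 / 8) ε p * heatOp u (cutoff (3 / 8) ε) p +
            2 * invMetric u p * gradSq (cutoff (3 / 8) ε) p) +
          M * (-2 * invMetric u p * gradInner (cutoff (3 / 8) ε) u p) := by ring
    _ ≤ harnackQuantity u p * cutoff (3 / 8) ε p + M * ((1 + C) * u p) :=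
        add_le_add
          (mul_le_mul_of_nonneg_left
            (hu.cutoff_mul_heatOp_add_gradSq_le hp hε helapsed.le hbump.le) hharnack)
          (mul_le_mul_of_nonneg_left
            (hu.neg_two_mul_gradInner_cutoff_le hp hε helapsed.le hbump.le) hM)
    _ = (2 + C) * (M * u p) := by linear_combination htouch

theorem le_of_isLocalMaxOn {M : ℝ} (hu : IsControlledSolution C T u) (hp : p ∈ cylinder T)
    (hε : 0 ≤ ε) (helapsed : 0 < elapsed ε p) (hbump : 0 < bump (3 / 8) p) (hM : 0 ≤ M)
    (htouch : cutoff (3 / 8) ε p * harnackQuantity u p = M * u p)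
    (hmax : IsLocalMaxOn (cutoff (3 / 8) ε * harnackQuantity u - M • u) {q | q.2 ≤ p.2} p) :
    M ≤ 4 * (2 + C) := by
  have hu1 := hu.one_le p hp
  have hC := hu.const_nonneg hp
  have hsq := hu.sq_cutoff_mul_dt_le hp hε helapsed hbump hM htouch hmax
  have hgrad : 3 * (cutoff (3 / 8) ε p * metricGradSq u p) ≤ C * u p := by
    have hbump_sq : bump (3 / 8) p * bump (3 / 8) p ≤ 1 := by
      have : bump (3 / 8) p ≤ 1 := by simp only [bump]; linarith [sq_nonneg ‖p.1‖]
      nlinarith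
    calc 3 * (cutoff (3 / 8) ε p * metricGradSq u p)
        ≤ 3 * (elapsed ε p * 1 * (C * u p ^ 2)) := by
          rw [cutoff, Pi.mul_apply, Pi.mul_apply]
          gcongr
          exacts [metricGradSq_nonneg u p, hu.metricGradSq_le p hp]
      _ = 3 * C * u p * (elapsed ε p * u p) := by ring
      _ ≤ 3 * C * u p * (1 / 8) := by gcongr; exact hu.elapsed_mul_le hp hε
      _ ≤ C * u p := by nlinarith
  by_contra! hlarge
  have hdt : M * u p / 2 ≤ -(cutoff (3 / 8) ε p * ∂[dt] u p) := by
    rw [harnackQuantity_apply] at htouch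
    nlinarith
  have hMu : M * u p ≤ 4 * (2 + C) := by
    have hpos : 0 < M * u p := by nlinarith
    nlinarith
  nlinarith

theorem cutoff_mul_harnackQuantity_le {t : ℝ} (hu : IsControlledSolution C T u) (hε : 0 < ε)
    (ht : t < T) (hp : p ∈ closedBall 0 (3 / 8) ×ˢ Icc ε t) :
    cutoff (3 / 8) ε p * harnackQuantity u p ≤ 4 * (2 + C) * u p := by
  set K : Set (Spacetime (Fin 2)) := closedBall 0 (3 / 8) ×ˢ Icc ε t
  have hK : K ⊆ cylinder T := prod_mono (closedBall_subset_ball (by norm_num))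
    fun s hs => ⟨hε.trans_le hs.1, hs.2.trans_lt ht⟩
  have upos {q} (hq : q ∈ K) : 0 < u q := one_pos.trans_le (hu.one_le q (hK hq))
  set ratio := fun q => cutoff (3 / 8) ε q * harnackQuantity u q / u q
  have hcont : ContinuousOn ratio K := fun q hq => ContinuousAt.continuousWithinAt <| by
    have hq3 := hu.contDiffAt (hK hq)
    exact (contDiff_cutoff (n := 0).continuous.continuousAt.mul
      (contDiffAt_harnackQuantity hq3).continuousAt).div hq3.continuousAt (upos hq).ne'
  obtain ⟨m, hm, hmax⟩ := ((isCompact_closedBall _ _).prod isCompact_Icc).exists_isMaxOn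
    ⟨p, hp⟩ hcont
  suffices ratio m ≤ 4 * (2 + C) from (div_le_iff₀ (upos hp)).1 ((hmax hp).trans this)
  rcases le_or_gt (ratio m) 0 with hnonpos | hpos
  · linarith [hu.const_nonneg (hK hm)]
  have hnorm : ‖m.1‖ ≤ 3 / 8 := mem_closedBall_zero_iff.1 hm.1
  have hcutoff : cutoff (3 / 8) ε m ≠ 0 := by
    intro h
    simp [ratio, h] at hpos
  have helapsed : 0 < elapsed ε m :=
    lt_of_le_of_ne (sub_nonneg.2 hm.2.1) (left_ne_zero_of_mul hcutoff).symm
  have hbump : 0 < bump (3 / 8) m :=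
    lt_of_le_of_ne (sub_nonneg.2 (by gcongr))
      (left_ne_zero_of_mul (right_ne_zero_of_mul hcutoff)).symm
  have htouch {q} (hq : q ∈ K) : cutoff (3 / 8) ε q * harnackQuantity u q = ratio q * u q :=
    (div_mul_cancel₀ _ (upos hq).ne').symm
  refine hu.le_of_isLocalMaxOn (hK hm) hε.le helapsed hbump hpos.le (htouch hm) ?_
  have hball : closedBall (0 : EuclideanSpace ℝ (Fin 2)) (3 / 8) ∈ 𝓝 m.1 := by
    refine closedBall_mem_nhds_of_mem (mem_ball_zero_iff.2 ?_)
    exact lt_of_pow_lt_pow_left₀ 2 (by norm_num) (sub_pos.1 hbump)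
  filter_upwards [prod_Icc_mem_nhdsWithin_past hball (sub_pos.1 helapsed) hm.2.2] with q hq
  simp only [Pi.sub_apply, Pi.mul_apply, Pi.smul_apply, smul_eq_mul, htouch hm, htouch hq]
  rw [sub_self, ← sub_mul]
  exact mul_nonpos_of_nonpos_of_nonneg (sub_nonpos.2 (hmax hq)) (upos hq).le

theorem neg_time_mul_dt_le (hu : IsControlledSolution C T u) (hp : p ∈ cylinder T)
    (hx : ‖p.1‖ ≤ 1 / 4) : p.2 * -∂[dt] u p ≤ 656 * (2 + C) * u p := by
  have hbound : ∀ᶠ ε in 𝓝[>] 0, cutoff (3 / 8) ε p * harnackQuantity u p ≤ 4 * (2 + C) * u p := by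
    filter_upwards [Ioo_mem_nhdsGT hp.2.1] with ε hε
    exact hu.cutoff_mul_harnackQuantity_le hε.1 hp.2.2
      ⟨mem_closedBall_zero_iff.2 (by linarith), hε.2.le, le_rfl⟩
  have hlim : Tendsto (fun ε => cutoff (3 / 8) ε p * harnackQuantity u p) (𝓝[>] 0)
      (𝓝 (p.2 * bump (3 / 8) p ^ 2 * harnackQuantity u p)) := by
    refine Tendsto.mono_left (Continuous.tendsto' ?_ _ _ ?_) nhdsWithin_le_nhds
    · simp only [cutoff, elapsed, Pi.mul_apply]; fun_prop
    · simp only [cutoff, elapsed, Pi.mul_apply]; ring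
  have hlimit := le_of_tendsto hlim hbound
  have hbump : 1 ≤ 164 * bump (3 / 8) p ^ 2 := by
    have : 5 / 64 ≤ bump (3 / 8) p := by simp only [bump]; nlinarith [norm_nonneg p.1]
    nlinarith
  have hle : p.2 * -∂[dt] u p ≤ p.2 * harnackQuantity u p := by
    rw [harnackQuantity_apply]
    exact mul_le_mul_of_nonneg_left (by linarith [metricGradSq_nonneg u p]) hp.2.1.le
  refine hle.trans ?_
  rcases le_total (p.2 * harnackQuantity u p) 0 with hneg | hpos
  · have := hu.one_le p hp
    have := hu.const_nonneg hp
    exact hneg.trans (by positivity)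
  · linarith [le_mul_of_one_le_left hpos hbump]

end IsControlledSolution

section Slices

variable {V : Type*} [NormedAddCommGroup V] [NormedSpace ℝ V] {f : V × ℝ → ℝ} {x : V} {t : ℝ}

theorem dirDeriv_slice (hf : DifferentiableAt ℝ f (x, t)) (w : V) :
    ∂[w] (fun y => f (y, t)) x = ∂[(w, 0)] f (x, t) := by
  have h : HasFDerivAt (fun y => f (y, t)) _ x :=
    hf.hasFDerivAt.comp x (hasFDerivAt_prodMk_left x t)
  simp [dirDeriv, h.fderiv]

theorem contDiffAt_slice {n : WithTop ℕ∞} (hf : ContDiffAt ℝ n f (x, t)) :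
    ContDiffAt ℝ n (fun y => f (y, t)) x :=
  hf.comp x (contDiffAt_id.prodMk contDiffAt_const)

theorem dirDeriv_dirDeriv_slice (hf : ContDiffAt ℝ 2 f (x, t)) (w : V) :
    ∂[w] (∂[w] (fun y => f (y, t))) x = ∂[(w, 0)] (∂[(w, 0)] f) (x, t) := by
  have first : ∂[w] (fun y => f (y, t)) =ᶠ[𝓝 x] fun y => ∂[(w, 0)] f (y, t) := by
    have toP : Tendsto (fun y => (y, t)) (𝓝 x) (𝓝 (x, t)) :=
      (Continuous.prodMk_left t).tendsto x
    exact (toP.eventually (eventually_differentiableAt hf one_le_two)).mono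
      fun y hy => dirDeriv_slice hy w
  rw [(dirDeriv_eventuallyEq first).eq_of_nhds, dirDeriv_slice (differentiableAt_dirDeriv hf)]

theorem deriv_time_slice (hf : DifferentiableAt ℝ f (x, t)) :
    deriv (fun s => f (x, s)) t = ∂[(0, 1)] f (x, t) := by
  have h : HasFDerivAt (fun s => f (x, s)) _ t :=
    hf.hasFDerivAt.comp t (hasFDerivAt_prodMk_right x t)
  simp [dirDeriv, h.hasDerivAt.deriv]

theorem norm_gradient_sq {ι : Type*} [Fintype ι] [DecidableEq ι] (f : EuclideanSpace ℝ ι → ℝ)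
    (x : EuclideanSpace ℝ ι) :
    ‖gradient f x‖ ^ 2 = ∑ i, ∂[EuclideanSpace.single i 1] f x ^ 2 := by
  have coord (i : ι) : gradient f x i = ∂[EuclideanSpace.single i 1] f x := by
    have h : inner ℝ (gradient f x) (EuclideanSpace.single i 1) = _ := inner_gradient_left
    simpa only [EuclideanSpace.inner_single_right, one_mul, conj_trivial, dirDeriv] using h
  simp only [EuclideanSpace.real_norm_sq_eq, coord]

theorem norm_gradient_log_slice_sq {ι : Type*} [Fintype ι] [DecidableEq ι]
    {f : Spacetime ι → ℝ} {x : EuclideanSpace ℝ ι} (hf : DifferentiableAt ℝ f (x, t))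
    (h0 : f (x, t) ≠ 0) :
    ‖gradient (fun y => log (f (y, t))) x‖ ^ 2 = gradSq f (x, t) / f (x, t) ^ 2 := by
  have hslice : DifferentiableAt ℝ (fun y => f (y, t)) x :=
    hf.comp x (differentiableAt_id.prodMk (differentiableAt_const t))
  simp only [norm_gradient_sq, dirDeriv_log hslice h0, dirDeriv_slice hf, div_pow,
    ← Finset.sum_div, gradSq_apply, dx]

theorem lap_slice {f : Spacetime (Fin 2) → ℝ} {x : EuclideanSpace ℝ (Fin 2)}
    (hf : ContDiffAt ℝ 2 f (x, t)) : lap (fun y => f (y, t)) x = flatLaplacian f (x, t) := by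
  simp [lap, iteratedFDeriv_two_apply, flatLaplacian_apply, dx, ← dirDeriv_dirDeriv_slice hf,
    dirDeriv_dirDeriv_eq_fderiv_fderiv (contDiffAt_slice hf)]

end Slices

/-- Only the left derivative of `f` at `T` is controlled; if `f` is not differentiable there, then
`deriv f T` is the junk value `0`. -/
theorem mul_neg_deriv_le_of_Ioo {f : ℝ → ℝ} {C T : ℝ} (hT : 0 < T)
    (hf : ContDiffOn ℝ 1 f (Ioc 0 T)) (hCf : 0 ≤ C * f T)
    (h : ∀ s ∈ Ioo 0 T, s * -deriv f s ≤ C * f s) : T * -deriv f T ≤ C * f T := by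
  by_cases hdiff : DifferentiableAt ℝ f T
  · have hderiv : ContinuousOn (derivWithin f (Ioc 0 T)) (Ioc 0 T) :=
      hf.continuousOn_derivWithin (uniqueDiffOn_Ioc 0 T) le_rfl
    have hTmem : T ∈ Ioc 0 T := right_mem_Ioc.2 hT
    have hclosure : T ∈ closure (Ioo 0 T) := by
      rw [closure_Ioo hT.ne]; exact right_mem_Icc.2 hT.le
    rw [← hdiff.derivWithin (uniqueDiffOn_Ioc 0 T T hTmem)]
    refine ContinuousWithinAt.closure_le hclosure
      (f := fun s => s * -derivWithin f (Ioc 0 T) s) (g := fun s => C * f s) ?_ ?_ fun s hs => ?_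
    · exact (continuousWithinAt_id.mul (hderiv T hTmem).neg).mono Ioo_subset_Ioc_self
    · exact (continuousWithinAt_const.mul (hf.continuousOn T hTmem)).mono Ioo_subset_Ioc_self
    · rw [derivWithin_of_mem_nhds (Ioc_mem_nhds hs.1 hs.2)]
      exact h s hs
  · simpa [deriv_zero_of_not_differentiableAt hdiff] using hCf

theorem isControlledSolution_of_slices {C T : ℝ} {v : EuclideanSpace ℝ (Fin 2) → ℝ → ℝ}
    (smooth : ContDiffOn ℝ 3 (fun p : EuclideanSpace ℝ (Fin 2) × ℝ => v p.1 p.2) (cylinder T))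
    (pde : ∀ x ∈ ball (0 : EuclideanSpace ℝ (Fin 2)) (1 / 2), ∀ t ∈ Ioo 0 T,
      deriv (fun s => v x s) t = exp (-2 * v x t) * lap (fun y => v y t) x)
    (one_le : ∀ x ∈ ball (0 : EuclideanSpace ℝ (Fin 2)) (1 / 2), ∀ t ∈ Ioo 0 T, 1 ≤ v x t)
    (gradient_le : ∀ x ∈ ball (0 : EuclideanSpace ℝ (Fin 2)) (1 / 2), ∀ t ∈ Ioo 0 T,
      exp (-2 * v x t) * ‖gradient (fun y => log (v y t)) x‖ ^ 2 ≤ C)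
    (time_le : ∀ x ∈ ball (0 : EuclideanSpace ℝ (Fin 2)) (1 / 2), ∀ t ∈ Ioo 0 T,
      T ≤ 1 / (8 * v x t)) :
    IsControlledSolution C T (fun p => v p.1 p.2) := by
  set u : Spacetime (Fin 2) → ℝ := fun p => v p.1 p.2
  have hu {p} (hp : p ∈ cylinder T) : ContDiffAt ℝ 2 u p :=
    (smooth.contDiffAt (isOpen_cylinder.mem_nhds hp)).of_le (by norm_num)
  refine ⟨smooth, ?_, fun p hp => one_le _ hp.1 _ hp.2, ?_, ?_⟩ <;> rintro ⟨x, t⟩ hp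
  · have h := pde x hp.1 t hp.2
    rw [lap_slice (f := u) (hu hp),
      deriv_time_slice (f := u) ((hu hp).differentiableAt two_ne_zero)] at h
    exact sub_eq_zero.2 h
  · have hpos : 0 < u (x, t) := one_pos.trans_le (one_le x hp.1 t hp.2)
    have h := gradient_le x hp.1 t hp.2
    rw [norm_gradient_log_slice_sq (f := u) ((hu hp).differentiableAt two_ne_zero) hpos.ne',
      ← mul_div_assoc, div_le_iff₀ (by positivity)] at h
    exact h
  · have hpos : 0 < u (x, t) := one_pos.trans_le (one_le x hp.1 t hp.2)
    have h := time_le x hp.1 t hp.2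
    change T * u (x, t) ≤ 1 / 8
    rw [le_div_iff₀ (by positivity)] at h
    linarith

end LiYau

open LiYau in
theorem liYau_harnack_general {C2 t0 : ℝ} {v : EuclideanSpace ℝ (Fin 2) → ℝ → ℝ}
    (smooth : ContDiffOn ℝ 3 (fun p : EuclideanSpace ℝ (Fin 2) × ℝ => v p.1 p.2)
      (ball 0 (1 / 2) ×ˢ Ioc 0 t0))
    (pde : ∀ x ∈ ball (0 : EuclideanSpace ℝ (Fin 2)) (1 / 2), ∀ t ∈ Ioc 0 t0,
      deriv (fun s => v x s) t = exp (-2 * v x t) * lap (fun y => v y t) x)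
    (one_le : ∀ x ∈ ball (0 : EuclideanSpace ℝ (Fin 2)) (1 / 2), ∀ t ∈ Ioc 0 t0, 1 ≤ v x t)
    (gradient_le : ∀ x ∈ ball (0 : EuclideanSpace ℝ (Fin 2)) (1 / 2), ∀ t ∈ Ioc 0 t0,
      exp (-2 * v x t) * ‖gradient (fun y => log (v y t)) x‖ ^ 2 ≤ C2)
    (time_le : ∀ x ∈ ball (0 : EuclideanSpace ℝ (Fin 2)) (1 / 2), ∀ t ∈ Ioc 0 t0,
      t0 ≤ 1 / (8 * v x t)) :
    ∀ x ∈ ball (0 : EuclideanSpace ℝ (Fin 2)) (1 / 4), ∀ t ∈ Ioc 0 t0,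
      -(exp (-2 * v x t) * lap (fun y => v y t) x) ≤ 656 * (2 + C2) * v x t / t := by
  intro x hx t ht
  have hxball : x ∈ ball (0 : EuclideanSpace ℝ (Fin 2)) (1 / 2) :=
    ball_subset_ball (by norm_num) hx
  have hsub {s : ℝ} (hs : s ∈ Ioo 0 t0) : s ∈ Ioc 0 t0 := Ioo_subset_Ioc_self hs
  have hsol : IsControlledSolution C2 t0 (fun p => v p.1 p.2) :=
    isControlledSolution_of_slices (smooth.mono (prod_mono_right Ioo_subset_Ioc_self))
      (fun y hy s hs => pde y hy s (hsub hs)) (fun y hy s hs => one_le y hy s (hsub hs))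
      (fun y hy s hs => gradient_le y hy s (hsub hs)) fun y hy s hs => time_le y hy s (hsub hs)
  have hC2 : 0 ≤ C2 := (mul_nonneg (exp_pos _).le (sq_nonneg _)).trans (gradient_le x hxball t ht)
  have hv : 0 ≤ v x t := zero_le_one.trans (one_le x hxball t ht)
  have hslice : ContDiffOn ℝ 1 (v x) (Ioc 0 t) :=
    (smooth.of_le (by norm_num)).comp (contDiff_const.prodMk contDiff_id).contDiffOn
      fun s hs => ⟨hxball, hs.1, hs.2.trans ht.2⟩
  rw [← pde x hxball t ht, le_div_iff₀ ht.1, mul_comm]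
  refine mul_neg_deriv_le_of_Ioo ht.1 hslice (by positivity) fun s hs => ?_
  have hp : (x, s) ∈ cylinder t0 := ⟨hxball, hs.1, hs.2.trans_le ht.2⟩
  have htime : deriv (v x) s = _ :=
    deriv_time_slice ((hsol.contDiffAt hp).differentiableAt three_ne_zero)
  rw [htime]
  exact hsol.neg_time_mul_dt_le hp (mem_ball_zero_iff.1 hx).le

/-- **Li–Yau type differential Harnack estimate.**
If `v` solves `∂ₜ v = e^{-2v} Δv` on `B̄_{1/2} × [0,t₀]`, with `v ≥ 1`,
`e^{-2v}|∇ log v|² ≤ C₂`, and `t₀ ≤ 1/(8 max v)`, then the Gauss curvature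
`K = -e^{-2v} Δv` satisfies `K ≤ C₃ v / t` on `B_{1/4} × (0,t₀]`,
where `C₃` depends only on `C₂`. -/
theorem liYau_harnack (C2 : ℝ) (hC2 : 0 < C2) :
    ∃ C3 : ℝ, 0 < C3 ∧
      ∀ (t0 : ℝ) (v : EuclideanSpace ℝ (Fin 2) → ℝ → ℝ),
        0 < t0 → t0 < 1/2 →
        ContDiffOn ℝ (⊤ : ℕ∞) (fun p : EuclideanSpace ℝ (Fin 2) × ℝ => v p.1 p.2)
          (closedBall 0 (1/2) ×ˢ Icc 0 t0) →
        (∀ x ∈ closedBall (0 : EuclideanSpace ℝ (Fin 2)) (1/2), ∀ t ∈ Icc (0:ℝ) t0,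
          deriv (fun s => v x s) t = exp (-2 * v x t) * lap (fun y => v y t) x) →
        (∀ x ∈ closedBall (0 : EuclideanSpace ℝ (Fin 2)) (1/2), ∀ t ∈ Icc (0:ℝ) t0,
          1 ≤ v x t) →
        (∀ x ∈ closedBall (0 : EuclideanSpace ℝ (Fin 2)) (1/2), ∀ t ∈ Icc (0:ℝ) t0,
          exp (-2 * v x t) * ‖gradient (fun y => log (v y t)) x‖^2 ≤ C2) →
        (∀ x ∈ closedBall (0 : EuclideanSpace ℝ (Fin 2)) (1/2), ∀ t ∈ Icc (0:ℝ) t0,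
          t0 ≤ 1 / (8 * v x t)) →
        ∀ x ∈ ball (0 : EuclideanSpace ℝ (Fin 2)) (1/4), ∀ t ∈ Ioc (0:ℝ) t0,
          -(exp (-2 * v x t) * lap (fun y => v y t) x) ≤ C3 * v x t / t := by
  refine ⟨656 * (2 + C2), by positivity, fun t0 v _ _ smooth pde one_le gradient_le time_le => ?_⟩
  have hx := ball_subset_closedBall (x := (0 : EuclideanSpace ℝ (Fin 2))) (ε := 1 / 2)
  have ht := Ioc_subset_Icc_self (a := 0) (b := t0)
  exact liYau_harnack_general ((contDiffOn_infty.1 smooth 3).mono (prod_mono hx ht))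
    (fun x h t h' => pde x (hx h) t (ht h')) (fun x h t h' => one_le x (hx h) t (ht h'))
    (fun x h t h' => gradient_le x (hx h) t (ht h')) fun x h t h' => time_le x (hx h) t (ht h')
end

section
/- There is a universal constant C < ∞ with the following property. Let T > 0 and let u : B × [0,T) → (0,∞) be a smooth solution of ∂_t u = Δ log u whose initial value satisfies u(x,0) ≤ h(x) for all x ∈ B∖{0}. Then log u(x,t) ≤ 2/t + C for all x ∈ B_{1/2} and all t ∈ (0, min{1,T}). -/
open Real MeasureTheory Metric Set Filter Topology

/-- The conformal factor `h(x) = 1/(|x|² (log|x|)²)` of the hyperbolic cusp metric. -/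
noncomputable def cuspH (x : EuclideanSpace ℝ (Fin 2)) : ℝ :=
  1 / (‖x‖^2 * (Real.log ‖x‖)^2)

open Laplacian Module

/-! Write `p = ‖x‖²` and let `g(p) = 4 / (p (log p)²)` be the profile of the cusp. Put
`ε(t) = exp (-2/t - 16)`. The barrier `V = (1 + 16 t) g(p + ε(t)) / (1 - 2p)²` lies above the
cusp at `t = 0` and is infinite on the circle `p = 1/2`, so `u / V < 1` on the parabolic boundary
of the disc `p < 1/2`. The growth of `ε` makes `g(p + ε(t))` decrease in time at a relative rate
of at most `ε'(t) / (p + ε(t))`; for this `ε` the linear growth of `V` and the negative part of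
`Δ log g(p + ε(t))` absorb that decrease, so `V` is a strict supersolution and the maximum
principle gives `u < V`. Finally `V ≲ (1 + t) / ε(t)` on `p < 1/4`, whose logarithm is
`2/t + O(1)` for `t ≤ 1`. -/

lemma deriv_deriv_nonpos_of_isLocalMax {f : ℝ → ℝ} {a : ℝ} (hmax : IsLocalMax f a)
    (hf : ContinuousAt f a) : deriv (deriv f) a ≤ 0 := by
  by_contra! hpos
  have hmin : IsLocalMin f a := isLocalMin_of_deriv_deriv_pos hpos hmax.deriv_eq_zero hf
  have hconst : f =ᶠ[𝓝 a] fun _ => f a := by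
    filter_upwards [hmax, hmin] with x hle hge using le_antisymm hle hge
  simp [hconst.deriv.deriv_eq] at hpos

lemma deriv_nonneg_of_isLocalMaxOn_Iic {f : ℝ → ℝ} {a : ℝ} (hmax : IsLocalMaxOn f (Iic a) a) :
    0 ≤ deriv f a := by
  by_cases hf : DifferentiableAt ℝ f a
  · have hmem : (-1 : ℝ) ∈ posTangentConeAt (Iic a) a :=
      mem_posTangentConeAt_of_segment_subset <|
        (convex_Iic a).segment_subset self_mem_Iic (by simp)
    simpa using hmax.hasFDerivWithinAt_nonpos hf.hasFDerivAt.hasFDerivWithinAt hmem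
  · rw [deriv_zero_of_not_differentiableAt hf]

section Laplacian

variable {E : Type*} [NormedAddCommGroup E] [NormedSpace ℝ E]

lemma iteratedFDeriv_two_eq_deriv_deriv_line {f : E → ℝ} {x : E} (hf : ContDiffAt ℝ 2 f x)
    (e : E) :
    iteratedFDeriv ℝ 2 f x ![e, e] = deriv (deriv fun τ : ℝ => f (x + τ • e)) 0 := by
  have hline (τ : ℝ) : HasDerivAt (fun τ : ℝ => x + τ • e) e τ := by
    simpa using ((hasDerivAt_id τ).smul_const e).const_add x
  have hline_tendsto : Tendsto (fun τ : ℝ => x + τ • e) (𝓝 0) (𝓝 x) := by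
    simpa using (hline 0).continuousAt.tendsto
  have hfirst : deriv (fun τ : ℝ => f (x + τ • e)) =ᶠ[𝓝 0]
      fun τ => fderiv ℝ f (x + τ • e) e := by
    filter_upwards [hline_tendsto.eventually (hf.eventually (by simp))] with τ hτ
    exact ((hτ.differentiableAt (by simp)).hasFDerivAt.comp_hasDerivAt τ (hline τ)).deriv
  have hsecond : HasFDerivAt (fderiv ℝ f) (fderiv ℝ (fderiv ℝ f) x) x :=
    ((hf.fderiv_right (m := 1) (by norm_num)).differentiableAt (by simp)).hasFDerivAt
  have hderiv : HasDerivAt (fun τ : ℝ => fderiv ℝ f (x + τ • e)) (fderiv ℝ (fderiv ℝ f) x e) 0 :=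
    hsecond.comp_hasDerivAt_of_eq 0 (hline 0) (by simp)
  rw [hfirst.deriv_eq, iteratedFDeriv_two_apply, (hderiv.clm_apply (hasDerivAt_const 0 e)).deriv]
  simp only [Matrix.cons_val_zero, Matrix.cons_val_one, Matrix.cons_val_fin_one, zero_smul,
    add_zero, map_zero]

lemma iteratedFDeriv_two_nonpos_of_isLocalMax {f : E → ℝ} {x : E} (hmax : IsLocalMax f x)
    (hf : ContDiffAt ℝ 2 f x) (e : E) : iteratedFDeriv ℝ 2 f x ![e, e] ≤ 0 := by
  have hline : ContinuousAt (fun τ : ℝ => x + τ • e) 0 := by fun_prop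
  rw [iteratedFDeriv_two_eq_deriv_deriv_line hf]
  apply deriv_deriv_nonpos_of_isLocalMax
  · have : IsLocalMax f (x + (0 : ℝ) • e) := by simpa using hmax
    exact this.comp_continuous (g := fun τ : ℝ => x + τ • e) hline
  · exact hf.continuousAt.comp_of_eq hline (by simp)

end Laplacian

section InnerProduct

variable {E : Type*} [NormedAddCommGroup E] [InnerProductSpace ℝ E] [FiniteDimensional ℝ E]

lemma laplacian_nonpos_of_isLocalMax {f : E → ℝ} {x : E} (hmax : IsLocalMax f x)
    (hf : ContDiffAt ℝ 2 f x) : Δ f x ≤ 0 := by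
  rw [InnerProductSpace.laplacian_eq_iteratedFDeriv_stdOrthonormalBasis]
  exact Finset.sum_nonpos fun i _ => iteratedFDeriv_two_nonpos_of_isLocalMax hmax hf _

lemma laplacian_le_of_isLocalMax_sub {f g : E → ℝ} {x : E} (hmax : IsLocalMax (f - g) x)
    (hf : ContDiffAt ℝ 2 f x) (hg : ContDiffAt ℝ 2 g x) : Δ f x ≤ Δ g x := by
  have := laplacian_nonpos_of_isLocalMax hmax (hf.sub hg)
  rwa [hf.laplacian_sub hg, sub_nonpos] at this

lemma laplacian_comp_norm_sq {φ φ' : ℝ → ℝ} {φ'' : ℝ} {x : E}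
    (hφ : ∀ᶠ p in 𝓝 (‖x‖ ^ 2), HasDerivAt φ (φ' p) p) (hφ' : HasDerivAt φ' φ'' (‖x‖ ^ 2)) :
    Δ (fun y : E => φ (‖y‖ ^ 2)) x = 4 * ‖x‖ ^ 2 * φ'' + 2 * finrank ℝ E * φ' (‖x‖ ^ 2) := by
  have hnorm (y : E) : HasFDerivAt (fun y : E => ‖y‖ ^ 2) (2 • innerSL ℝ y) y :=
    (hasStrictFDerivAt_norm_sq y).hasFDerivAt
  have hfirst : fderiv ℝ (fun y => φ (‖y‖ ^ 2)) =ᶠ[𝓝 x]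
      fun y => φ' (‖y‖ ^ 2) • 2 • innerSL ℝ y := by
    filter_upwards [(hnorm x).continuousAt.eventually hφ] with y hy
    exact (hy.comp_hasFDerivAt y (hnorm y)).fderiv
  have hinner : HasFDerivAt (fun y : E => 2 • innerSL ℝ y) (2 • innerSL ℝ : E →L[ℝ] E →L[ℝ] ℝ) x :=
    (2 • innerSL ℝ : E →L[ℝ] E →L[ℝ] ℝ).hasFDerivAt
  have hsecond : HasFDerivAt (fun y : E => φ' (‖y‖ ^ 2) • 2 • innerSL ℝ y) _ x :=
    (hφ'.comp_hasFDerivAt x (hnorm x)).smul hinner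
  have hdir (e : E) : iteratedFDeriv ℝ 2 (fun y => φ (‖y‖ ^ 2)) x ![e, e] =
      4 * φ'' * inner ℝ x e ^ 2 + 2 * φ' (‖x‖ ^ 2) * ‖e‖ ^ 2 := by
    rw [iteratedFDeriv_two_apply, hfirst.fderiv_eq, hsecond.fderiv]
    have hself : (innerSL ℝ : E →L[ℝ] E →L[ℝ] ℝ) e e = ‖e‖ ^ 2 := real_inner_self_eq_norm_sq e
    simp only [Function.comp_apply, Matrix.cons_val_zero, Matrix.cons_val_one,
      Matrix.cons_val_fin_one, add_apply, smul_apply,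
      ContinuousLinearMap.smulRight_apply, innerSL_apply_apply, nsmul_eq_mul, Nat.cast_ofNat,
      smul_eq_mul, hself]
    ring
  simp only [InnerProductSpace.laplacian_eq_iteratedFDeriv_stdOrthonormalBasis, hdir,
    OrthonormalBasis.norm_eq_one, Finset.sum_add_distrib, ← Finset.mul_sum,
    OrthonormalBasis.sum_sq_inner_left, one_pow, Finset.sum_const, Finset.card_univ,
    Fintype.card_fin, nsmul_eq_mul, mul_one]
  ring

end InnerProduct

lemma exists_first_hitting_time {X : Type*} [TopologicalSpace X] [T2Space X] {K : Set X}
    (hK : IsCompact K) {Q : X × ℝ → ℝ} {a b c : ℝ} (hab : a ≤ b)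
    (hQ : ContinuousOn Q (K ×ˢ Icc a b)) (hinit : ∀ x ∈ K, Q (x, a) < c)
    (hhit : ∃ x ∈ K, c ≤ Q (x, b)) :
    ∃ x₀ ∈ K, ∃ t₀ ∈ Ioc a b, Q (x₀, t₀) = c ∧ ∀ x ∈ K, ∀ t ∈ Icc a t₀, Q (x, t) ≤ c := by
  have hKab : IsCompact (K ×ˢ Icc a b) := hK.prod isCompact_Icc
  have hS : IsCompact (K ×ˢ Icc a b ∩ Q ⁻¹' Ici c) :=
    hKab.of_isClosed_subset (hQ.preimage_isClosed_of_isClosed hKab.isClosed isClosed_Ici)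
      inter_subset_left
  obtain ⟨x, hx, hxc⟩ := hhit
  obtain ⟨⟨x₀, t₀⟩, ⟨⟨hx₀, ht₀⟩, hc⟩, hmin⟩ := hS.exists_isMinOn
    ⟨(x, b), ⟨hx, right_mem_Icc.2 hab⟩, hxc⟩ (continuous_snd (X := X)).continuousOn
  have hat : a < t₀ := ht₀.1.lt_of_ne fun h => (hinit x₀ hx₀).not_ge (h ▸ hc)
  have hbefore : ∀ y ∈ K, ∀ t ∈ Ico a t₀, Q (y, t) ≤ c := fun y hy t ht => by
    by_contra! hct
    exact ht.2.not_ge (hmin ⟨⟨hy, ht.1, ht.2.le.trans ht₀.2⟩, hct.le⟩)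
  have hupto : ∀ y ∈ K, ∀ t ∈ Icc a t₀, Q (y, t) ≤ c := fun y hy t ht => by
    rw [← closure_Ico hat.ne] at ht
    have hQy : ContinuousOn (fun s => Q (y, s)) (closure (Ico a t₀)) := by
      rw [closure_Ico hat.ne]
      exact hQ.comp (by fun_prop) fun s hs => ⟨hy, hs.1, hs.2.trans ht₀.2⟩
    exact le_on_closure (hbefore y hy) hQy continuousOn_const ht
  exact ⟨x₀, hx₀, t₀, ⟨hat, ht₀.2⟩,
    (hupto x₀ hx₀ t₀ (right_mem_Icc.2 hat.le)).antisymm hc, hupto⟩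

section Comparison

variable {E : Type*} [NormedAddCommGroup E] [InnerProductSpace ℝ E] {Ω K : Set E} {T : ℝ}
  {u v : E → ℝ → ℝ}

/-- A positive function on `Ω × (0, T)` that is twice continuously differentiable in space and
differentiable in time, so that both sides of `∂ₜ u = Δ log u` make sense classically. -/
structure IsPositiveClassical (Ω : Set E) (T : ℝ) (u : E → ℝ → ℝ) : Prop where
  pos : ∀ x ∈ Ω, ∀ t ∈ Ioo 0 T, 0 < u x t
  contDiffAt : ∀ x ∈ Ω, ∀ t ∈ Ioo 0 T, ContDiffAt ℝ 2 (fun y => u y t) x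
  differentiableAt : ∀ x ∈ Ω, ∀ t ∈ Ioo 0 T, DifferentiableAt ℝ (u x) t

variable [FiniteDimensional ℝ E]

/-- A classical subsolution of the logarithmic diffusion equation `∂ₜ u = Δ log u`, which in
dimension two is the Ricci flow of the conformal metric with factor `u`. -/
structure IsLogDiffusionSubsolution (Ω : Set E) (T : ℝ) (u : E → ℝ → ℝ) : Prop
    extends IsPositiveClassical Ω T u where
  deriv_le : ∀ x ∈ Ω, ∀ t ∈ Ioo 0 T, deriv (u x) t ≤ Δ (fun y : E => log (u y t)) x

/-- A classical strict supersolution of the logarithmic diffusion equation `∂ₜ v = Δ log v`. -/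
structure IsStrictLogDiffusionSupersolution (Ω : Set E) (T : ℝ) (v : E → ℝ → ℝ) : Prop
    extends IsPositiveClassical Ω T v where
  lt_deriv : ∀ x ∈ Ω, ∀ t ∈ Ioo 0 T, Δ (fun y : E => log (v y t)) x < deriv (v x) t

lemma IsLogDiffusionSubsolution.mono {Ω' : Set E} (hu : IsLogDiffusionSubsolution Ω T u)
    (h : Ω' ⊆ Ω) : IsLogDiffusionSubsolution Ω' T u where
  pos x hx := hu.pos x (h hx)
  contDiffAt x hx := hu.contDiffAt x (h hx)
  differentiableAt x hx := hu.differentiableAt x (h hx)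
  deriv_le x hx := hu.deriv_le x (h hx)

lemma not_touch_of_isLogDiffusionSubsolution (hu : IsLogDiffusionSubsolution Ω T u)
    (hv : IsStrictLogDiffusionSupersolution Ω T v) {x : E} {t : ℝ} (hx : x ∈ Ω)
    (ht : t ∈ Ioo 0 T) (heq : u x t = v x t) (hspace : ∀ᶠ y in 𝓝 x, u y t ≤ v y t)
    (htime : ∀ᶠ s in 𝓝[≤] t, u x s ≤ v x s) : False := by
  have hmax_time : IsLocalMaxOn (u x - v x) (Iic t) t := by
    filter_upwards [htime] with s hs
    simpa [heq] using hs
  have hpos : ∀ᶠ y in 𝓝 x, 0 < u y t :=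
    (hu.contDiffAt x hx t ht).continuousAt.eventually (eventually_gt_nhds (hu.pos x hx t ht))
  have hmax_space : IsLocalMax ((fun y => log (u y t)) - fun y => log (v y t)) x := by
    filter_upwards [hspace, hpos] with y hy hy_pos
    simpa [heq] using log_le_log hy_pos hy
  have hderiv : deriv (v x) t ≤ deriv (u x) t := by
    have := deriv_nonneg_of_isLocalMaxOn_Iic hmax_time
    rwa [deriv_sub (hu.differentiableAt x hx t ht) (hv.differentiableAt x hx t ht),
      sub_nonneg] at this
  refine lt_irrefl (deriv (v x) t) ?_
  calc deriv (v x) t ≤ deriv (u x) t := hderiv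
    _ ≤ Δ (fun y : E => log (u y t)) x := hu.deriv_le x hx t ht
    _ ≤ Δ (fun y : E => log (v y t)) x := laplacian_le_of_isLocalMax_sub hmax_space
        ((hu.contDiffAt x hx t ht).log (hu.pos x hx t ht).ne')
        ((hv.contDiffAt x hx t ht).log (hv.pos x hx t ht).ne')
    _ < deriv (v x) t := hv.lt_deriv x hx t ht

-- Only `u / v` enters on the parabolic boundary, so that `v = ∞` can be encoded by the junk value
-- `v = 0`.
theorem lt_of_isStrictLogDiffusionSupersolution (hΩ : IsOpen Ω) (hK : IsCompact K) (hΩK : Ω ⊆ K)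
    (hu : IsLogDiffusionSubsolution Ω T u) (hv : IsStrictLogDiffusionSupersolution Ω T v)
    (hcont : ContinuousOn (fun q : E × ℝ => u q.1 q.2 / v q.1 q.2) (K ×ˢ Ico 0 T))
    (hinit : ∀ x ∈ K, u x 0 / v x 0 < 1)
    (hlateral : ∀ x ∈ K \ Ω, ∀ t ∈ Ioo 0 T, u x t / v x t < 1) {x : E} (hx : x ∈ Ω) {t : ℝ}
    (ht : t ∈ Ioo 0 T) : u x t < v x t := by
  by_contra! hle
  obtain ⟨x₀, hx₀K, t₀, ht₀, htouch, hbefore⟩ := exists_first_hitting_time hK ht.1.le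
    (hcont.mono (prod_mono_right fun s hs => ⟨hs.1, hs.2.trans_lt ht.2⟩)) hinit
    ⟨x, hΩK hx, (one_le_div (hv.pos x hx t ht)).2 hle⟩
  have ht₀T : t₀ ∈ Ioo 0 T := ⟨ht₀.1, ht₀.2.trans_lt ht.2⟩
  have hx₀ : x₀ ∈ Ω := by
    by_contra hx₀
    exact (hlateral x₀ ⟨hx₀K, hx₀⟩ t₀ ht₀T).ne htouch
  have hle_upto : ∀ y ∈ Ω, ∀ s ∈ Ioc 0 t₀, u y s ≤ v y s := fun y hy s hs =>
    (div_le_one (hv.pos y hy s ⟨hs.1, hs.2.trans_lt ht₀T.2⟩)).1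
      (hbefore y (hΩK hy) s ⟨hs.1.le, hs.2⟩)
  refine not_touch_of_isLogDiffusionSubsolution hu hv hx₀ ht₀T
    (eq_of_div_eq_one htouch) ?_ ?_
  · filter_upwards [hΩ.mem_nhds hx₀] with y hy using hle_upto y hy t₀ ⟨ht₀.1, le_rfl⟩
  · filter_upwards [Ioc_mem_nhdsLE ht₀.1] with s hs using hle_upto x₀ hx₀ s hs

end Comparison

section Profile

variable {s : ℝ}

/-- The conformal factor of the hyperbolic cusp as a function of `s = ‖x‖²`, so that
`cuspH x = cuspProfile (‖x‖ ^ 2)`. -/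
noncomputable def cuspProfile (s : ℝ) : ℝ := 4 / (s * log s ^ 2)

lemma cuspH_eq_cuspProfile (x : EuclideanSpace ℝ (Fin 2)) :
    cuspH x = cuspProfile (‖x‖ ^ 2) := by
  rw [cuspH, cuspProfile, log_pow, mul_pow, mul_left_comm]
  push_cast
  rw [show (2 : ℝ) ^ 2 = 4 by norm_num, ← mul_div_mul_left 1 _ (four_ne_zero' ℝ), mul_one]

lemma sq_le_exp {y : ℝ} (hy : 0 ≤ y) : y ^ 2 ≤ exp y := by
  have hhalf : y ≤ exp (y / 2) := by
    nlinarith [quadratic_le_exp_of_nonneg (x := y / 2) (by linarith), sq_nonneg (y - 2)]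
  calc y ^ 2 ≤ exp (y / 2) ^ 2 := by gcongr
    _ = exp y := by rw [← exp_nat_mul]; congr 1; push_cast; ring

lemma mul_log_sq_le_one (hs₀ : 0 < s) (hs₁ : s ≤ 1) : s * log s ^ 2 ≤ 1 := by
  calc s * log s ^ 2 = s * (-log s) ^ 2 := by rw [neg_sq]
    _ ≤ s * exp (-log s) := by gcongr; exact sq_le_exp (by linarith [log_nonpos hs₀.le hs₁])
    _ = 1 := by rw [exp_neg, exp_log hs₀, mul_inv_cancel₀ hs₀.ne']

lemma continuousOn_mul_log_sq : ContinuousOn (fun s : ℝ => s * log s ^ 2) (Ici 0) := by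
  have hsqrt : Continuous fun s : ℝ => 4 * (√s * log √s) ^ 2 :=
    ((continuous_mul_log.comp continuous_sqrt).pow 2).const_mul 4
  refine hsqrt.continuousOn.congr fun s hs => ?_
  simp only [mul_pow, sq_sqrt hs, log_sqrt hs]
  ring

lemma cuspProfile_pos (hs₀ : 0 < s) (hs₁ : s < 1) : 0 < cuspProfile s := by
  have := (log_neg hs₀ hs₁).ne
  unfold cuspProfile
  positivity

lemma hasDerivAt_cuspProfile (hs₀ : 0 < s) (hs₁ : s < 1) :
    HasDerivAt cuspProfile (-(cuspProfile s * ((1 + 2 / log s) / s))) s := by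
  have hlog := (log_neg hs₀ hs₁).ne
  refine ((hasDerivAt_const s (4 : ℝ)).div
    ((hasDerivAt_id s).mul ((hasDerivAt_log hs₀.ne').pow 2)) ?_).congr_deriv ?_
  · exact mul_ne_zero hs₀.ne' (pow_ne_zero 2 hlog)
  simp only [Pi.mul_apply, Pi.pow_apply, id_eq, Nat.cast_ofNat, zero_mul, one_mul, zero_sub,
    Nat.add_one_sub_one, pow_one, cuspProfile]
  field_simp

lemma hasDerivAt_log_cuspProfile (hs₀ : 0 < s) (hs₁ : s < 1) :
    HasDerivAt (fun s => log (cuspProfile s)) (-((1 + 2 / log s) / s)) s := by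
  refine ((hasDerivAt_cuspProfile hs₀ hs₁).log (cuspProfile_pos hs₀ hs₁).ne').congr_deriv ?_
  rw [neg_div, mul_div_cancel_left₀ _ (cuspProfile_pos hs₀ hs₁).ne']

lemma hasDerivAt_deriv_log_cuspProfile (hs₀ : 0 < s) (hs₁ : s < 1) :
    HasDerivAt (fun s => -((1 + 2 / log s) / s)) ((1 + 2 / log s + 2 / log s ^ 2) / s ^ 2) s := by
  have hlog := (log_neg hs₀ hs₁).ne
  refine (((((hasDerivAt_const s (2 : ℝ)).div (hasDerivAt_log hs₀.ne') hlog).const_add 1).div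
    (hasDerivAt_id s) hs₀.ne').neg).congr_deriv ?_
  simp only [Pi.div_apply, id_eq, zero_mul, zero_sub, mul_one]
  field_simp
  ring

end Profile

section Regularization

/-- The smooth function `exp (-2 (1 / t + 8))` for `t > 0`, extended by `0` to `t ≤ 0`: it is added
to `‖x‖²` so as to fill in the cusp at positive times. -/
noncomputable def cuspReg (t : ℝ) : ℝ := expNegInvGlue (t / 2) * exp (-16)

lemma cuspReg_of_pos {t : ℝ} (ht : 0 < t) : cuspReg t = exp (-2 * (1 / t + 8)) := by
  rw [cuspReg, expNegInvGlue, if_neg (by linarith), ← exp_add]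
  congr 1
  field_simp
  ring

lemma cuspReg_zero : cuspReg 0 = 0 := by simp [cuspReg]

lemma cuspReg_nonneg (t : ℝ) : 0 ≤ cuspReg t :=
  mul_nonneg (expNegInvGlue.nonneg _) (exp_pos _).le

lemma cuspReg_pos {t : ℝ} (ht : 0 < t) : 0 < cuspReg t := by
  rw [cuspReg_of_pos ht]
  positivity

lemma continuous_cuspReg : Continuous cuspReg := by
  have : Continuous expNegInvGlue := (expNegInvGlue.contDiff (n := 0)).continuous
  unfold cuspReg
  fun_prop

lemma cuspReg_lt_quarter {t : ℝ} (ht : 0 < t) : cuspReg t < 1 / 4 := by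
  have hP : -2 * (1 / t + 8) < -16 := by linarith [one_div_pos.2 ht]
  have hexp : (16 : ℝ) + 1 ≤ exp 16 := add_one_le_exp 16
  calc cuspReg t < exp (-16) := by rw [cuspReg_of_pos ht]; exact exp_lt_exp.2 hP
    _ = 1 / exp 16 := by rw [exp_neg, one_div]
    _ ≤ 1 / 4 := by gcongr; linarith

lemma hasDerivAt_cuspReg {t : ℝ} (ht : 0 < t) :
    HasDerivAt cuspReg (cuspReg t * (2 / t ^ 2)) t := by
  have hexp : HasDerivAt (fun t : ℝ => exp (-2 * (t⁻¹ + 8)))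
      (exp (-2 * (t⁻¹ + 8)) * (-2 * -(t ^ 2)⁻¹)) t :=
    (((hasDerivAt_inv ht.ne').add_const 8).const_mul (-2)).exp
  have heq : cuspReg =ᶠ[𝓝 t] fun t => exp (-2 * (t⁻¹ + 8)) := by
    filter_upwards [eventually_gt_nhds ht] with s hs
    rw [cuspReg_of_pos hs, one_div]
  refine (hexp.congr_of_eventuallyEq heq).congr_deriv ?_
  rw [cuspReg_of_pos ht, one_div]
  ring

end Regularization

section Barrier

variable {p t : ℝ}

/-- The barrier, as a function of `p = ‖x‖²` and time: the cusp profile, regularized by `cuspReg t`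
and growing linearly in time, times a conformal factor that blows up on the circle `p = 1 / 2`. Both
there and at `p = t = 0` the intended value `∞` is replaced by `0`. The growth rate `16` is twice
the constant in `cuspReg`, which gives `(1 + 16 * t) / t ^ 2 ≤ (1 / t + 8) ^ 2`. -/
noncomputable def cuspBarrier (p t : ℝ) : ℝ :=
  (1 + 16 * t) * cuspProfile (p + cuspReg t) / (1 - 2 * p) ^ 2

lemma add_cuspReg_mem_Ioo (hp₀ : 0 ≤ p) (hp : p < 1 / 2) (ht : 0 < t) :
    p + cuspReg t ∈ Ioo 0 1 :=
  ⟨by linarith [cuspReg_pos ht], by linarith [cuspReg_lt_quarter ht]⟩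

lemma cuspBarrier_pos (hp₀ : 0 ≤ p) (hp : p < 1 / 2) (ht : 0 < t) : 0 < cuspBarrier p t := by
  obtain ⟨hs₀, hs₁⟩ := add_cuspReg_mem_Ioo hp₀ hp ht
  have := cuspProfile_pos hs₀ hs₁
  have : 0 < 1 - 2 * p := by linarith
  unfold cuspBarrier
  positivity

lemma cuspBarrier_zero_right (p : ℝ) : cuspBarrier p 0 = cuspProfile p / (1 - 2 * p) ^ 2 := by
  simp [cuspBarrier, cuspReg_zero]

lemma cuspBarrier_half_left (t : ℝ) : cuspBarrier (1 / 2) t = 0 := by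
  simp [cuspBarrier]

lemma div_cuspBarrier_zero_right_lt_one {m : ℝ} (hp₀ : 0 ≤ p) (hp : p ≤ 1 / 2)
    (hm : p ≠ 0 → m ≤ cuspProfile p) : m / cuspBarrier p 0 < 1 := by
  rw [cuspBarrier_zero_right]
  rcases hp₀.eq_or_lt with rfl | hp_pos
  · simp [cuspProfile]
  · have hg := cuspProfile_pos hp_pos (by linarith)
    calc m / (cuspProfile p / (1 - 2 * p) ^ 2)
        = m / cuspProfile p * (1 - 2 * p) ^ 2 := by
          rw [div_div_eq_mul_div, mul_div_right_comm]
      _ ≤ 1 * (1 - 2 * p) ^ 2 := by gcongr; exact (div_le_one hg).2 (hm hp_pos.ne')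
      _ < 1 := by nlinarith

lemma continuousOn_inv_cuspBarrier :
    ContinuousOn (fun q : ℝ × ℝ => (cuspBarrier q.1 q.2)⁻¹) (Ici 0 ×ˢ Ici 0) := by
  have hinv : (fun q : ℝ × ℝ => (cuspBarrier q.1 q.2)⁻¹) = fun q =>
      (1 - 2 * q.1) ^ 2 * ((q.1 + cuspReg q.2) * log (q.1 + cuspReg q.2) ^ 2) /
        (4 * (1 + 16 * q.2)) := by
    funext q
    rw [cuspBarrier, cuspProfile, inv_div, mul_div_assoc', div_div_eq_mul_div, mul_comm 4]
  have hreg : ContinuousOn (fun q : ℝ × ℝ => q.1 + cuspReg q.2) (Ici 0 ×ˢ Ici 0) :=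
    (continuous_fst.add (continuous_cuspReg.comp continuous_snd)).continuousOn
  have hprofile := continuousOn_mul_log_sq.comp hreg fun q hq =>
    add_nonneg hq.1 (cuspReg_nonneg q.2)
  rw [hinv]
  refine ((by fun_prop : ContinuousOn _ _).mul hprofile).div (by fun_prop) fun q hq => ?_
  have : 0 ≤ q.2 := hq.2
  positivity

lemma hasDerivAt_cuspBarrier (hp₀ : 0 ≤ p) (hp : p < 1 / 2) (ht : 0 < t) :
    HasDerivAt (cuspBarrier p) (cuspProfile (p + cuspReg t) / (1 - 2 * p) ^ 2 *
      (16 - (1 + 16 * t) * (2 / t ^ 2) * (cuspReg t / (p + cuspReg t)) *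
        (1 + 2 / log (p + cuspReg t)))) t := by
  obtain ⟨hs₀, hs₁⟩ := add_cuspReg_mem_Ioo hp₀ hp ht
  have hprofile : HasDerivAt (fun t => cuspProfile (p + cuspReg t)) _ t :=
    HasDerivAt.comp (h₂ := cuspProfile) (h := fun t => p + cuspReg t) t
      (hasDerivAt_cuspProfile hs₀ hs₁) ((hasDerivAt_cuspReg ht).const_add p)
  have hlinear : HasDerivAt (fun t : ℝ => 1 + 16 * t) (16 * 1) t :=
    ((hasDerivAt_id t).const_mul 16).const_add 1
  refine ((hlinear.mul hprofile).div_const ((1 - 2 * p) ^ 2)).congr_deriv ?_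
  ring

lemma log_cuspBarrier (hs : p + cuspReg t ∈ Ioo 0 1) (hp : p < 1 / 2) (ht : 0 < t) :
    log (cuspBarrier p t) =
      log (1 + 16 * t) + log (cuspProfile (p + cuspReg t)) - 2 * log (1 - 2 * p) := by
  have hg := (cuspProfile_pos hs.1 hs.2).ne'
  have hlin : 1 + 16 * t ≠ 0 := by positivity
  have hone : (1 - 2 * p) ^ 2 ≠ 0 := pow_ne_zero 2 (by linarith)
  rw [cuspBarrier, log_div (mul_ne_zero hlin hg) hone, log_mul hlin hg, log_pow]
  norm_cast

lemma eventually_add_cuspReg_mem_Ioo (hs : p + cuspReg t ∈ Ioo 0 1) :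
    ∀ᶠ r in 𝓝 p, r + cuspReg t ∈ Ioo 0 1 :=
  (continuous_add_const (cuspReg t)).continuousAt.eventually (isOpen_Ioo.mem_nhds hs)

lemma hasDerivAt_log_cuspBarrier_left (hs : p + cuspReg t ∈ Ioo 0 1) (hp : p < 1 / 2)
    (ht : 0 < t) :
    HasDerivAt (fun p => log (cuspBarrier p t))
      (-((1 + 2 / log (p + cuspReg t)) / (p + cuspReg t)) + 4 * (1 - 2 * p)⁻¹) p := by
  have hsplit : (fun p => log (cuspBarrier p t)) =ᶠ[𝓝 p] fun p =>
      log (1 + 16 * t) + log (cuspProfile (p + cuspReg t)) - 2 * log (1 - 2 * p) := by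
    filter_upwards [eventually_add_cuspReg_mem_Ioo hs, eventually_lt_nhds hp] with r hr hr_lt
    exact log_cuspBarrier hr hr_lt ht
  have hone : HasDerivAt (fun p : ℝ => 1 - 2 * p) (-(2 * 1)) p :=
    ((hasDerivAt_id p).const_mul 2).const_sub 1
  refine ((((hasDerivAt_log_cuspProfile hs.1 hs.2).comp_add_const p _).const_add _).sub
    ((hone.log (by linarith)).const_mul 2)).congr_of_eventuallyEq hsplit |>.congr_deriv ?_
  ring

lemma hasDerivAt_deriv_log_cuspBarrier_left (hs : p + cuspReg t ∈ Ioo 0 1) (hp : p < 1 / 2) :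
    HasDerivAt
      (fun p => -((1 + 2 / log (p + cuspReg t)) / (p + cuspReg t)) + 4 * (1 - 2 * p)⁻¹)
      ((1 + 2 / log (p + cuspReg t) + 2 / log (p + cuspReg t) ^ 2) / (p + cuspReg t) ^ 2 +
        8 / (1 - 2 * p) ^ 2) p := by
  have hone : HasDerivAt (fun p : ℝ => 1 - 2 * p) (-(2 * 1)) p :=
    ((hasDerivAt_id p).const_mul 2).const_sub 1
  refine (((hasDerivAt_deriv_log_cuspProfile hs.1 hs.2).comp_add_const p _).add
    ((hone.inv (by linarith)).const_mul 4)).congr_deriv ?_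
  ring

lemma exp_sub_mul_two_sq_sub_sq_le_one {P L : ℝ} (hL : L ≤ 2 * P) :
    exp (L - 2 * P) * (2 * P ^ 2 - L ^ 2) ≤ 1 := by
  calc exp (L - 2 * P) * (2 * P ^ 2 - L ^ 2)
      ≤ exp (L - 2 * P) * (2 * P - L) ^ 2 := by gcongr; nlinarith [sq_nonneg (P - L)]
    _ ≤ exp (L - 2 * P) * exp (2 * P - L) := by gcongr; exact sq_le_exp (by linarith)
    _ = 1 := by rw [← exp_add]; simp

lemma cuspReg_mul_sq_le_one (ht : 0 < t) : cuspReg t * (1 / t + 8) ^ 2 ≤ 1 := by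
  have hP : 0 ≤ 1 / t + 8 := by positivity
  calc cuspReg t * (1 / t + 8) ^ 2
      ≤ cuspReg t * exp (1 / t + 8) := by gcongr; exacts [cuspReg_nonneg t, sq_le_exp hP]
    _ = exp (-(1 / t + 8)) := by rw [cuspReg_of_pos ht, ← exp_add]; congr 1; ring
    _ ≤ 1 := exp_le_one_iff.2 (by linarith)

lemma two_mul_sq_mul_cuspReg_div_le (hp₀ : 0 ≤ p) (hp : p < 1 / 2) (ht : 0 < t) :
    2 * (1 / t + 8) ^ 2 * (cuspReg t / (p + cuspReg t)) ≤
      9 + (1 - 2 * p) ^ 2 * (cuspReg t / (p + cuspReg t)) * log (p + cuspReg t) ^ 2 := by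
  obtain ⟨hs₀, hs₁⟩ := add_cuspReg_mem_Ioo hp₀ hp ht
  have hε := cuspReg_pos ht
  have hP := cuspReg_mul_sq_le_one ht
  have hratio : cuspReg t / (p + cuspReg t) =
      exp (-log (p + cuspReg t) - 2 * (1 / t + 8)) := by
    rw [sub_eq_add_neg, exp_add, exp_neg, exp_log hs₀, ← neg_mul, ← cuspReg_of_pos ht,
      div_eq_inv_mul]
  have hlog : -log (p + cuspReg t) ≤ 2 * (1 / t + 8) := by
    have := log_le_log hε (le_add_of_nonneg_left hp₀)
    rw [cuspReg_of_pos ht, log_exp, ← cuspReg_of_pos ht] at this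
    linarith
  have hexp : cuspReg t / (p + cuspReg t) *
      (2 * (1 / t + 8) ^ 2 - log (p + cuspReg t) ^ 2) ≤ 1 := by
    rw [hratio]
    simpa only [neg_sq] using exp_sub_mul_two_sq_sub_sq_le_one hlog
  set P := 1 / t + 8
  set s := p + cuspReg t
  -- Split the left-hand side with the weights `(1 - 2p)²` and `1 - (1 - 2p)² ≤ 4s`.
  have hinner : (1 - 2 * p) ^ 2 * (cuspReg t / s * (2 * P ^ 2 - log s ^ 2)) ≤ 1 :=
    (mul_le_of_le_one_right (by positivity) hexp).trans (by nlinarith)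
  have houter : (1 - (1 - 2 * p) ^ 2) * (2 * P ^ 2 * (cuspReg t / s)) ≤ 8 := by
    calc (1 - (1 - 2 * p) ^ 2) * (2 * P ^ 2 * (cuspReg t / s))
        ≤ 4 * s * (2 * P ^ 2 * (cuspReg t / s)) := by gcongr; nlinarith
      _ = 8 * (cuspReg t * P ^ 2) := by field_simp; ring
      _ ≤ 8 := by linarith
  linarith

lemma growth_mul_cuspReg_div_le (hp₀ : 0 ≤ p) (hp : p < 1 / 2) (ht : 0 < t) :
    (1 + 16 * t) * (2 / t ^ 2) * (cuspReg t / (p + cuspReg t)) * (1 + 2 / log (p + cuspReg t)) ≤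
      9 + (1 - 2 * p) ^ 2 * (cuspReg t / (p + cuspReg t)) *
        (log (p + cuspReg t) ^ 2 + 2 * log (p + cuspReg t) + 2) := by
  obtain ⟨hs₀, hs₁⟩ := add_cuspReg_mem_Ioo hp₀ hp ht
  have hlog : log (p + cuspReg t) < 0 := log_neg hs₀ hs₁
  have hkey := two_mul_sq_mul_cuspReg_div_le hp₀ hp ht
  have hgrowth : (1 + 16 * t) * (2 / t ^ 2) ≤ 2 * (1 / t + 8) ^ 2 := by
    field_simp
    nlinarith
  have hratio : 0 ≤ cuspReg t / (p + cuspReg t) := div_nonneg (cuspReg_nonneg t) hs₀.le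
  generalize cuspReg t / (p + cuspReg t) = ρ at *
  generalize log (p + cuspReg t) = l at *
  set q := 1 + 2 / l with hq
  have hq₁ : q ≤ 1 := by linarith [div_neg_of_pos_of_neg two_pos hlog]
  have hql : l ^ 2 * q = l ^ 2 + 2 * l := by rw [hq]; field_simp [hlog.ne]
  rcases le_total q 0 with hq₀ | hq₀
  · calc (1 + 16 * t) * (2 / t ^ 2) * ρ * q ≤ 0 :=
          mul_nonpos_of_nonneg_of_nonpos (by positivity) hq₀
      _ ≤ 9 + (1 - 2 * p) ^ 2 * ρ * ((l + 1) ^ 2 + 1) := by positivity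
      _ = 9 + (1 - 2 * p) ^ 2 * ρ * (l ^ 2 + 2 * l + 2) := by ring
  · calc (1 + 16 * t) * (2 / t ^ 2) * ρ * q
        ≤ 2 * (1 / t + 8) ^ 2 * ρ * q := by gcongr
      _ ≤ (9 + (1 - 2 * p) ^ 2 * ρ * l ^ 2) * q := by gcongr
      _ = 9 * q + (1 - 2 * p) ^ 2 * ρ * (l ^ 2 + 2 * l) := by rw [← hql]; ring
      _ ≤ 9 + (1 - 2 * p) ^ 2 * ρ * (l ^ 2 + 2 * l + 2) :=
        add_le_add (by linarith) (mul_le_mul_of_nonneg_left (by linarith) (by positivity))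

lemma cuspBarrier_strict_supersolution_ineq (hp₀ : 0 ≤ p) (hp : p < 1 / 2) (ht : 0 < t) :
    16 / (1 - 2 * p) ^ 2 + cuspProfile (p + cuspReg t) *
        (2 - cuspReg t / (p + cuspReg t) *
          (log (p + cuspReg t) ^ 2 + 2 * log (p + cuspReg t) + 2)) <
      cuspProfile (p + cuspReg t) / (1 - 2 * p) ^ 2 *
        (16 - (1 + 16 * t) * (2 / t ^ 2) * (cuspReg t / (p + cuspReg t)) *
          (1 + 2 / log (p + cuspReg t))) := by
  obtain ⟨hs₀, hs₁⟩ := add_cuspReg_mem_Ioo hp₀ hp ht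
  have hbound := growth_mul_cuspReg_div_le hp₀ hp ht
  have hg : 4 ≤ cuspProfile (p + cuspReg t) := by
    have := (log_neg hs₀ hs₁).ne
    rw [cuspProfile, le_div_iff₀ (by positivity)]
    linarith [mul_log_sq_le_one hs₀ hs₁.le]
  have hD₀ : 0 < (1 - 2 * p) ^ 2 := pow_pos (by linarith) 2
  have hD₁ : (1 - 2 * p) ^ 2 ≤ 1 := pow_le_one₀ (by linarith) (by linarith)
  generalize cuspProfile (p + cuspReg t) = g at *
  generalize (1 - 2 * p) ^ 2 = D at *
  set A := cuspReg t / (p + cuspReg t) * (log (p + cuspReg t) ^ 2 + 2 * log (p + cuspReg t) + 2)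
    with hA
  calc 16 / D + g * (2 - A) = (16 + g * (2 * D - D * A)) / D := by field_simp
    _ < g * (7 - D * A) / D := by gcongr; nlinarith
    _ = g / D * (16 - (9 + D * A)) := by ring
    _ ≤ _ := by gcongr; rw [hA]; linarith

end Barrier

section BarrierSupersolution

variable {E : Type*} [NormedAddCommGroup E] [InnerProductSpace ℝ E] {x : E} {t : ℝ}

lemma contDiffAt_cuspBarrier_norm_sq (hx : ‖x‖ ^ 2 < 1 / 2) (ht : 0 < t) :
    ContDiffAt ℝ 2 (fun y : E => cuspBarrier (‖y‖ ^ 2) t) x := by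
  obtain ⟨hs₀, hs₁⟩ := add_cuspReg_mem_Ioo (sq_nonneg ‖x‖) hx ht
  have hlog := (log_neg hs₀ hs₁).ne
  have hnorm : ContDiffAt ℝ 2 (fun y : E => ‖y‖ ^ 2) x := contDiffAt_id.norm_sq ℝ
  have hs : ContDiffAt ℝ 2 (fun y : E => ‖y‖ ^ 2 + cuspReg t) x := hnorm.add contDiffAt_const
  have hprofile : ContDiffAt ℝ 2 (fun y : E => cuspProfile (‖y‖ ^ 2 + cuspReg t)) x :=
    contDiffAt_const.div (hs.mul ((hs.log hs₀.ne').pow 2)) (by positivity)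
  exact (contDiffAt_const.mul hprofile).div
    ((contDiffAt_const.sub (contDiffAt_const.mul hnorm)).pow 2) (pow_ne_zero 2 (by linarith))

variable [FiniteDimensional ℝ E]

lemma laplacian_log_cuspBarrier (hE : finrank ℝ E = 2) (hx : ‖x‖ ^ 2 < 1 / 2) (ht : 0 < t) :
    Δ (fun y : E => log (cuspBarrier (‖y‖ ^ 2) t)) x =
      16 / (1 - 2 * ‖x‖ ^ 2) ^ 2 + cuspProfile (‖x‖ ^ 2 + cuspReg t) *
        (2 - cuspReg t / (‖x‖ ^ 2 + cuspReg t) *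
          (log (‖x‖ ^ 2 + cuspReg t) ^ 2 + 2 * log (‖x‖ ^ 2 + cuspReg t) + 2)) := by
  have hs := add_cuspReg_mem_Ioo (sq_nonneg ‖x‖) hx ht
  have hfirst := (eventually_add_cuspReg_mem_Ioo hs).and (eventually_lt_nhds hx) |>.mono
    fun p hp => hasDerivAt_log_cuspBarrier_left hp.1 hp.2 ht
  have hlog : log (‖x‖ ^ 2 + cuspReg t) ≠ 0 := (log_neg hs.1 hs.2).ne
  have hs₀ : ‖x‖ ^ 2 + cuspReg t ≠ 0 := hs.1.ne'
  have hone : 1 - 2 * ‖x‖ ^ 2 ≠ 0 := by linarith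
  rw [laplacian_comp_norm_sq hfirst (hasDerivAt_deriv_log_cuspBarrier_left hs hx), hE, cuspProfile]
  generalize log (‖x‖ ^ 2 + cuspReg t) = l at *
  generalize ‖x‖ ^ 2 = p at *
  generalize hsum : p + cuspReg t = s at *
  have hblowup : 4 * p * (8 / (1 - 2 * p) ^ 2) + 4 * (4 * (1 - 2 * p)⁻¹) =
      16 / (1 - 2 * p) ^ 2 := by
    field_simp
    ring
  have hcusp : 4 * p * ((1 + 2 / l + 2 / l ^ 2) / s ^ 2) - 4 * ((1 + 2 / l) / s) =
      4 / (s * l ^ 2) * (2 - cuspReg t / s * (l ^ 2 + 2 * l + 2)) := by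
    rw [eq_sub_of_add_eq' hsum]
    field_simp
    ring
  push_cast
  linear_combination hblowup + hcusp

theorem isStrictLogDiffusionSupersolution_cuspBarrier (hE : finrank ℝ E = 2) (T : ℝ) :
    IsStrictLogDiffusionSupersolution {x : E | ‖x‖ ^ 2 < 1 / 2} T
      (fun x t => cuspBarrier (‖x‖ ^ 2) t) where
  pos x hx t ht := cuspBarrier_pos (sq_nonneg ‖x‖) hx ht.1
  contDiffAt x hx t ht := contDiffAt_cuspBarrier_norm_sq hx ht.1
  differentiableAt x hx t ht :=
    (hasDerivAt_cuspBarrier (sq_nonneg ‖x‖) hx ht.1).differentiableAt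
  lt_deriv x hx t ht := by
    rw [laplacian_log_cuspBarrier hE hx ht.1,
      (hasDerivAt_cuspBarrier (sq_nonneg ‖x‖) hx ht.1).deriv]
    exact cuspBarrier_strict_supersolution_ineq (sq_nonneg ‖x‖) hx ht.1

end BarrierSupersolution

section Domain

variable {E : Type*} [NormedAddCommGroup E]

lemma setOf_norm_sq_le_half_subset_ball : {x : E | ‖x‖ ^ 2 ≤ 1 / 2} ⊆ ball 0 1 := by
  intro x (hx : ‖x‖ ^ 2 ≤ 1 / 2)
  rw [mem_ball_zero_iff]
  exact lt_of_pow_lt_pow_left₀ 2 zero_le_one (by linarith)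

lemma isCompact_setOf_norm_sq_le_half [ProperSpace E] : IsCompact {x : E | ‖x‖ ^ 2 ≤ 1 / 2} :=
  (isCompact_closedBall 0 1).of_isClosed_subset (isClosed_le (by fun_prop) continuous_const)
    (setOf_norm_sq_le_half_subset_ball.trans ball_subset_closedBall)

end Domain

section CuspComparison

variable {E : Type*} [NormedAddCommGroup E] [InnerProductSpace ℝ E] [FiniteDimensional ℝ E]
  {T : ℝ} {u : E → ℝ → ℝ}

theorem lt_cuspBarrier (hE : finrank ℝ E = 2)
    (hcont : ContinuousOn (fun q : E × ℝ => u q.1 q.2) (ball 0 1 ×ˢ Ico 0 T))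
    (hu : IsLogDiffusionSubsolution (ball 0 1) T u)
    (hinit : ∀ x ∈ ball 0 1, x ≠ 0 → u x 0 ≤ cuspProfile (‖x‖ ^ 2)) {x : E}
    (hx : ‖x‖ ^ 2 < 1 / 2) {t : ℝ} (ht : t ∈ Ioo 0 T) : u x t < cuspBarrier (‖x‖ ^ 2) t := by
  have hinner : {x : E | ‖x‖ ^ 2 < 1 / 2} ⊆ {x : E | ‖x‖ ^ 2 ≤ 1 / 2} :=
    fun y (hy : ‖y‖ ^ 2 < 1 / 2) => hy.le
  have hball := setOf_norm_sq_le_half_subset_ball (E := E)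
  have hinv : ContinuousOn (fun q : E × ℝ => (cuspBarrier (‖q.1‖ ^ 2) q.2)⁻¹)
      ({x | ‖x‖ ^ 2 ≤ 1 / 2} ×ˢ Ico 0 T) :=
    continuousOn_inv_cuspBarrier.comp (f := fun q : E × ℝ => (‖q.1‖ ^ 2, q.2)) (by fun_prop)
      fun q hq => ⟨sq_nonneg ‖q.1‖, hq.2.1⟩
  refine lt_of_isStrictLogDiffusionSupersolution (isOpen_lt (by fun_prop) continuous_const)
    isCompact_setOf_norm_sq_le_half hinner (hu.mono (hinner.trans hball))
    (isStrictLogDiffusionSupersolution_cuspBarrier hE T) ?_ ?_ ?_ hx ht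
  · exact ((hcont.mono (prod_mono_left hball)).mul hinv).congr fun q _ => div_eq_mul_inv _ _
  · exact fun y hy => div_cuspBarrier_zero_right_lt_one (sq_nonneg ‖y‖) hy fun hy₀ =>
      hinit y (hball hy) (by simpa using hy₀)
  · rintro y ⟨hy, hy'⟩ s -
    have : ‖y‖ ^ 2 = 1 / 2 := hy.antisymm (not_lt.1 hy')
    rw [this, cuspBarrier_half_left, div_zero]
    exact one_pos

end CuspComparison

section Bound

variable {p t : ℝ}

lemma cuspBarrier_le (hp₀ : 0 ≤ p) (hp : p < 1 / 4) (ht : 0 < t) :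
    cuspBarrier p t ≤ 256 * exp 16 / log 2 ^ 2 * (1 + t) * exp (2 / t) := by
  have hε := cuspReg_pos ht
  have hs : p + cuspReg t ≤ 1 / 2 := by linarith [cuspReg_lt_quarter ht]
  have hlog_two : 0 < log 2 := log_pos one_lt_two
  have hlog : log 2 ^ 2 ≤ log (p + cuspReg t) ^ 2 := by
    have : log (p + cuspReg t) ≤ -log 2 := by
      rw [← log_inv, ← one_div]
      exact log_le_log (by positivity) hs
    nlinarith
  have hdist : 1 / 4 ≤ (1 - 2 * p) ^ 2 := by nlinarith
  calc cuspBarrier p t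
      ≤ (16 * (1 + t)) * (4 / (cuspReg t * log 2 ^ 2)) / (1 / 4) := by
        unfold cuspBarrier cuspProfile
        gcongr <;> linarith
    _ = 256 * exp 16 / log 2 ^ 2 * (1 + t) * exp (2 / t) := by
        have hexp : (cuspReg t)⁻¹ = exp 16 * exp (2 / t) := by
          rw [cuspReg_of_pos ht, ← exp_neg, ← exp_add]
          congr 1
          ring
        rw [div_mul_eq_div_mul_one_div 4, one_div, div_eq_mul_inv 4, hexp]
        ring

lemma log_cuspBarrier_le (hp₀ : 0 ≤ p) (hp : p < 1 / 4) (ht : 0 < t) :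
    log (cuspBarrier p t) ≤ 2 / t + log (1 + t) + log (256 * exp 16 / log 2 ^ 2) := by
  have := (log_pos one_lt_two).ne'
  have hlin : 1 + t ≠ 0 := by positivity
  calc log (cuspBarrier p t)
      ≤ log (256 * exp 16 / log 2 ^ 2 * (1 + t) * exp (2 / t)) :=
        log_le_log (cuspBarrier_pos hp₀ (by linarith) ht) (cuspBarrier_le hp₀ hp ht)
    _ = 2 / t + log (1 + t) + log (256 * exp 16 / log 2 ^ 2) := by
        rw [log_mul (by positivity) (exp_ne_zero _), log_mul (by positivity) hlin, log_exp]
        ring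

end Bound

lemma lap_eq_laplacian (f : EuclideanSpace ℝ (Fin 2) → ℝ) (x : EuclideanSpace ℝ (Fin 2)) :
    lap f x = Δ f x := by
  rw [InnerProductSpace.laplacian_eq_iteratedFDeriv_orthonormalBasis f
    (EuclideanSpace.basisFun (Fin 2) ℝ)]
  simp [lap, Fin.sum_univ_two]

lemma isLogDiffusionSubsolution_of_contDiffOn {Ω : Set (EuclideanSpace ℝ (Fin 2))} {T : ℝ}
    {u : EuclideanSpace ℝ (Fin 2) → ℝ → ℝ} (hΩ : IsOpen Ω)
    (hsmooth : ContDiffOn ℝ 2 (fun q : EuclideanSpace ℝ (Fin 2) × ℝ => u q.1 q.2) (Ω ×ˢ Ico 0 T))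
    (hpos : ∀ x ∈ Ω, ∀ t ∈ Ioo 0 T, 0 < u x t)
    (heq : ∀ x ∈ Ω, ∀ t ∈ Ioo 0 T, deriv (u x) t = lap (fun y => log (u y t)) x) :
    IsLogDiffusionSubsolution Ω T u := by
  have hat : ∀ x ∈ Ω, ∀ t ∈ Ioo 0 T,
      ContDiffAt ℝ 2 (fun q : EuclideanSpace ℝ (Fin 2) × ℝ => u q.1 q.2) (x, t) :=
    fun x hx t ht => hsmooth.contDiffAt (prod_mem_nhds (hΩ.mem_nhds hx) (Ico_mem_nhds ht.1 ht.2))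
  exact
    { pos := hpos
      contDiffAt := fun x hx t ht => (hat x hx t ht).comp x (contDiffAt_id.prodMk contDiffAt_const)
      differentiableAt := fun x hx t ht =>
        ((hat x hx t ht).comp t (contDiffAt_const.prodMk contDiffAt_id)).differentiableAt
          two_ne_zero
      deriv_le := fun x hx t ht => (heq x hx t ht).trans_le (lap_eq_laplacian _ _).le }

theorem cusp_smoothing_estimate_general :
    ∃ C : ℝ, ∀ (T : ℝ) (u : EuclideanSpace ℝ (Fin 2) → ℝ → ℝ),
      ContinuousOn (fun q : EuclideanSpace ℝ (Fin 2) × ℝ => u q.1 q.2) (ball 0 1 ×ˢ Ico 0 T) →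
      IsLogDiffusionSubsolution (ball 0 1) T u →
      (∀ x ∈ ball (0 : EuclideanSpace ℝ (Fin 2)) 1, x ≠ 0 → u x 0 ≤ cuspH x) →
      ∀ x ∈ ball (0 : EuclideanSpace ℝ (Fin 2)) (1 / 2), ∀ t ∈ Ioo 0 T,
        log (u x t) ≤ 2 / t + log (1 + t) + C := by
  refine ⟨log (256 * exp 16 / log 2 ^ 2), fun T u hcont hu hinit x hx t ht => ?_⟩
  have hp : ‖x‖ ^ 2 < 1 / 4 := by
    rw [mem_ball_zero_iff] at hx
    nlinarith [norm_nonneg x]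
  have hu_pos : 0 < u x t := hu.pos x (ball_subset_ball (by norm_num) hx) t ht
  have hlt : u x t < cuspBarrier (‖x‖ ^ 2) t :=
    lt_cuspBarrier finrank_euclideanSpace_fin hcont hu
      (fun y hy hy₀ => (hinit y hy hy₀).trans_eq (cuspH_eq_cuspProfile y)) (by linarith) ht
  exact (log_le_log hu_pos hlt.le).trans (log_cuspBarrier_le (sq_nonneg ‖x‖) hp ht.1)

/-- **Smoothing estimate.** There is a universal constant `C` such that any smooth
positive solution of `∂ₜ u = Δ log u` on `B × [0,T)` with `u(·,0) ≤ h` on `B∖{0}`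
satisfies `log u ≤ 2/t + C` on `B_{1/2}` for `t ∈ (0, min{1,T})`. -/
theorem cusp_smoothing_estimate :
    ∃ C : ℝ, ∀ (T : ℝ) (u : EuclideanSpace ℝ (Fin 2) → ℝ → ℝ),
      0 < T →
      ContDiffOn ℝ (⊤ : ℕ∞) (fun p : EuclideanSpace ℝ (Fin 2) × ℝ => u p.1 p.2)
        (ball 0 1 ×ˢ Ico 0 T) →
      (∀ x ∈ ball (0 : EuclideanSpace ℝ (Fin 2)) 1, ∀ t ∈ Ico (0:ℝ) T, 0 < u x t) →
      (∀ x ∈ ball (0 : EuclideanSpace ℝ (Fin 2)) 1, ∀ t ∈ Ico (0:ℝ) T,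
        deriv (fun s => u x s) t = lap (fun y => log (u y t)) x) →
      (∀ x ∈ ball (0 : EuclideanSpace ℝ (Fin 2)) 1, x ≠ 0 → u x 0 ≤ cuspH x) →
      ∀ x ∈ ball (0 : EuclideanSpace ℝ (Fin 2)) (1/2), ∀ t : ℝ, 0 < t → t < min 1 T →
        log (u x t) ≤ 2 / t + C := by
  obtain ⟨C, hC⟩ := cusp_smoothing_estimate_general
  refine ⟨C + 1, fun T u _ hsmooth hpos heq hinit x hx t ht₀ ht => ?_⟩
  have hbound := hC T u hsmooth.continuousOn
    (isLogDiffusionSubsolution_of_contDiffOn isOpen_ball (contDiffOn_infty.1 hsmooth 2)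
      (fun y hy s hs => hpos y hy s (Ioo_subset_Ico_self hs))
      fun y hy s hs => heq y hy s (Ioo_subset_Ico_self hs))
    hinit x hx t ⟨ht₀, (lt_min_iff.1 ht).2⟩
  linarith [log_le_sub_one_of_pos (show 0 < 1 + t by linarith), (lt_min_iff.1 ht).1]
end
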